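/- arXiv:2404.16643 — 2 statements merged into one kernel-verified Lean document; each statement's English description precedes it below -/
import Mathlib

section
/- Let P be a finite poset and S_*(P) ⊆ C̃_*(P) a synor complex for P. Then for each k ≥ −1 there exists a K-linear map ρ_k : C̃_k(P) → S_k(P) such that: (R0) ρ_{−1} is the identity on C̃_{−1}(P) = K (sending the empty chain to itself, viewed as a (−1)-synor chain); (R1) ρ_{k−1} ∘ ∂_k = ∂_k ∘ ρ_k for all k ≥ 0; (R2) for every order chain c = (x₀ > ⋯ > x_k), the chain ρ_k(c) is supported in P_{≤x₀}, i.e. ρ_k(c) ∈ ⊕_{y ≤ x₀} S_k(P)^{(y)}. -/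
open Finsupp

noncomputable section

variable (K : Type) [Field K]

section Core
variable (P : Type) [Preorder P]

/-- Order chains with `n` elements of the poset `P`, written as strictly
decreasing tuples `(x₀ > x₁ > ⋯ > x_{n-1})`. -/
def OChain (n : ℕ) : Type := {c : Fin n → P // StrictAnti c}

/-- The chain group in "level" `n`: the `K`-vector space with basis the order chains with
`n` elements.  Level `n` corresponds to homological degree `n - 1`; in particular
`CGrp K P 0 ≅ K` is the reduced part `C̃₋₁`. -/
abbrev CGrp (n : ℕ) : Type := OChain P n →₀ K

/-- Deletion of the `k`-th entry of an order chain. -/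
def odel {n : ℕ} (k : Fin (n + 1)) (c : OChain P (n + 1)) : OChain P n :=
  ⟨c.1 ∘ k.succAbove, c.2.comp_strictMono (Fin.strictMono_succAbove k)⟩

/-- The simplicial boundary map (of the reduced simplicial chain complex of the order
complex), from level `n+1` to level `n`. -/
def cbdry (n : ℕ) : CGrp K P (n + 1) →ₗ[K] CGrp K P n :=
  Finsupp.lsum K fun c => ∑ k : Fin (n + 1), ((-1 : K) ^ (k : ℕ)) • Finsupp.lsingle (odel P k c)

/-- The cycles in level `n` (every level-0 chain, i.e. multiple of the empty chain,
is a cycle). -/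
def cyclesAt : (n : ℕ) → Submodule K (CGrp K P n)
  | 0 => ⊤
  | (n + 1) => LinearMap.ker (cbdry K P n)

/-- The boundaries in level `n`. -/
def boundariesIn (n : ℕ) : Submodule K (CGrp K P n) :=
  LinearMap.range (cbdry K P n)

/-- `H̃_{n-1}(P) ≠ 0`: nontriviality of the reduced simplicial homology (with coefficients
in `K`) of the order complex of `P` in degree `n - 1` (level `n`). -/
def RHomNontrivial (n : ℕ) : Prop := ¬ cyclesAt K P n ≤ boundariesIn K P n

/-- The subspace of chains all of whose elements lie in the subset `J ⊆ P`
(the chain group of the subposet `J`). -/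
def chainsIn (J : Set P) (n : ℕ) : Submodule K (CGrp K P n) :=
  Finsupp.supported K K {c : OChain P n | ∀ r, c.1 r ∈ J}

/-- Transport of chain groups along an equality of levels. -/
def castCGrp {a b : ℕ} (h : a = b) : CGrp K P a ≃ₗ[K] CGrp K P b :=
  Finsupp.domLCongr (Equiv.cast (congrArg (OChain P) h))

end Core


section Synor
variable (P : Type) [PartialOrder P]

/-- For a family `S` of graded pieces (with `S n x` the piece of homological degree `n`,
i.e. level `n+1`, sitting over `x ∈ P`) and a subset `J ⊆ P`, the part of the complex
lying over `J`: at level `0` it is all of `C̃₋₁ = K`, and at level `n+1` it is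
`⊕_{x ∈ J} S_n^{(x)}`. -/
def idealPart (S : (n : ℕ) → P → Submodule K (CGrp K P (n + 1))) (J : Set P) :
    (nn : ℕ) → Submodule K (CGrp K P nn)
  | 0 => ⊤
  | (n + 1) => ⨆ x ∈ J, S n x

/-- A synor complex for the finite poset `P`: a strictly `P`-graded subcomplex
`S_*(P) ⊆ C̃_*(P)` of the reduced simplicial chain complex of the order complex of `P`
(we identify the injective `P`-graded chain map `φ` with the inclusion of its image) with:
`S_i(P) = ⊕_{x ∈ P} S_i(P)^{(x)}` with `S_i(P)^{(x)}` contained in the span of the order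
chains with largest element `x` (`graded`); `∂(S_i(P)^{(x)}) ⊆ ⊕_{y<x} S_{i-1}(P)^{(y)}`
(`strict`; for degree `0` the boundary lands in `C̃₋₁ = K` automatically); (S1)
`dim_K S_i(P)^{(x)} = dim_K H̃_{i-1}(P_{<x})` (`dim_eq`, the dimension of the reduced
homology being the dimension of the cycles minus the dimension of the boundaries); and
(S2) for every order ideal `J ⊆ P` the inclusion `S_*(P)^J ⊆ C̃_*(J)` induces an
isomorphism on homology (`quasiIso`: surjectivity and injectivity of the induced map). -/
structure SynorComplex : Type where
  S : (n : ℕ) → P → Submodule K (CGrp K P (n + 1))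
  graded : ∀ (n : ℕ) (x : P),
    S n x ≤ Finsupp.supported K K {c : OChain P (n + 1) | c.1 0 = x}
  strict : ∀ (n : ℕ) (x : P), ∀ f ∈ S (n + 1) x,
    cbdry K P (n + 1) f ∈ ⨆ y ∈ Set.Iio x, S n y
  dim_eq : ∀ (n : ℕ) (x : P),
    Module.finrank K ↥(S n x) =
      Module.finrank K ↥(cyclesAt K {y : P // y < x} n) -
        Module.finrank K ↥(boundariesIn K {y : P // y < x} n)
  quasiIso : ∀ J : Set P, IsLowerSet J → ∀ nn : ℕ,
    (∀ z ∈ cyclesAt K P nn ⊓ chainsIn K P J nn,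
        ∃ a ∈ cyclesAt K P nn ⊓ idealPart K P S J nn,
          z - a ∈ Submodule.map (cbdry K P nn) (chainsIn K P J (nn + 1))) ∧
    (∀ a ∈ idealPart K P S J nn,
        a ∈ Submodule.map (cbdry K P nn) (chainsIn K P J (nn + 1)) →
        a ∈ Submodule.map (cbdry K P nn) (idealPart K P S J (nn + 1)))

end Synor

/-!
The proof is the method of acyclic carriers, an order chain being carried by the part of the synor
complex over the order ideal that the chain generates. Coning with apex `x` contracts the chain
complex of `P_{≤x}`, and `quasiIso` then makes the synor complex over `P_{≤x}` acyclic as well.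
Since `ρ (∂ c)` is a cycle carried by `P_{≤x₀}`, where `x₀` is the top of `c`, it bounds a synor
chain over `P_{≤x₀}`, and any such chain may serve as `ρ c`.
-/

section AcyclicCarrier

lemma exists_seq_of_forall_exists_succ {α : ℕ → Sort*} {p : ∀ n, α n → Prop}
    {r : ∀ n, α n → α (n + 1) → Prop} (a₀ : α 0) (h₀ : p 0 a₀)
    (hsucc : ∀ n a, p n a → ∃ b, p (n + 1) b ∧ r n a b) :
    ∃ f : ∀ n, α n, f 0 = a₀ ∧ (∀ n, p n (f n)) ∧ ∀ n, r n (f n) (f (n + 1)) := by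
  choose next hp hr using hsucc
  let f : ∀ n, {a : α n // p n a} := fun n =>
    Nat.rec ⟨a₀, h₀⟩ (fun n a => ⟨next n a.1 a.2, hp n a.1 a.2⟩) n
  exact ⟨fun n => (f n).1, rfl, fun n => (f n).2, fun n => hr n (f n).1 (f n).2⟩

lemma map_mem_of_mem_supported {R α M : Type*} [Semiring R] [AddCommMonoid M] [Module R M]
    {s : Set α} {f : (α →₀ R) →ₗ[R] M} {p : Submodule R M}
    (hf : ∀ a ∈ s, f (single a 1) ∈ p) {v : α →₀ R} (hv : v ∈ supported R R s) : f v ∈ p := by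
  suffices supported R R s ≤ p.comap f from this hv
  rw [supported_eq_span_single, Submodule.span_le]
  exact Set.image_subset_iff.mpr hf

lemma map_mem_of_forall_single_mem {R α M : Type*} [Semiring R] [AddCommMonoid M] [Module R M]
    {f : (α →₀ R) →ₗ[R] M} {p : Submodule R M} (hf : ∀ a, f (single a 1) ∈ p) (v : α →₀ R) :
    f v ∈ p :=
  map_mem_of_mem_supported (fun a _ => hf a) (mem_supported_support R v)

lemma exists_comp_eq_of_forall_single_mem_map {R α M N : Type*} [Semiring R] [AddCommMonoid M]
    [Module R M] [AddCommMonoid N] [Module R N] (g : M →ₗ[R] N) (f : (α →₀ R) →ₗ[R] N)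
    (Φ : α → Submodule R M) (h : ∀ a, f (single a 1) ∈ (Φ a).map g) :
    ∃ f' : (α →₀ R) →ₗ[R] M, (∀ a, f' (single a 1) ∈ Φ a) ∧ f = g ∘ₗ f' := by
  choose m hm hgm using h
  exact ⟨linearCombination R m, fun a => by simpa using hm a, by ext a; simp [hgm]⟩

variable {R : Type*} [Semiring R] {ι : ℕ → Type*} {M : ℕ → Type*} [∀ n, AddCommMonoid (M n)]
  [∀ n, Module R (M n)]

/-- `Φ` is an acyclic carrier from the free complex `d` with bases `ι n` to the complex `δ`: to a
basis element `a` of degree `n` it assigns submodules `Φ n a m` of `M m`, which shrink when passing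
to the faces of `a`. Acyclicity is asked only in degree `n - 1`, where the boundary of `a` is sent.
Degree `0` is the lowest one, so that all its elements count as cycles. -/
structure IsAcyclicCarrier (d : ∀ n, (ι (n + 1) →₀ R) →ₗ[R] (ι n →₀ R))
    (δ : ∀ n, M (n + 1) →ₗ[R] M n) (Φ : ∀ n, ι n → ∀ m, Submodule R (M m)) : Prop where
  boundary_mem : ∀ n (a : ι (n + 1)),
    d n (single a 1) ∈ supported R R {b | Φ n b n ≤ Φ (n + 1) a n}
  acyclic_zero : ∀ a : ι 1, Φ 1 a 0 ≤ (Φ 1 a 1).map (δ 0)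
  acyclic_succ : ∀ n (a : ι (n + 2)),
    LinearMap.ker (δ n) ⊓ Φ (n + 2) a (n + 1) ≤ (Φ (n + 2) a (n + 2)).map (δ (n + 1))

namespace IsAcyclicCarrier

variable {d : ∀ n, (ι (n + 1) →₀ R) →ₗ[R] (ι n →₀ R)} {δ : ∀ n, M (n + 1) →ₗ[R] M n}
  {Φ : ∀ n, ι n → ∀ m, Submodule R (M m)}

lemma map_boundary_mem (hΦ : IsAcyclicCarrier d δ Φ) {n : ℕ} {φ : (ι n →₀ R) →ₗ[R] M n}
    (hφ : ∀ b, φ (single b 1) ∈ Φ n b n) (a : ι (n + 1)) :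
    φ (d n (single a 1)) ∈ Φ (n + 1) a n :=
  map_mem_of_mem_supported (fun b (hb : Φ n b n ≤ Φ (n + 1) a n) => hb (hφ b))
    (hΦ.boundary_mem n a)

theorem exists_chainMap (hΦ : IsAcyclicCarrier d δ Φ) (hd : ∀ n, d n ∘ₗ d (n + 1) = 0)
    (φ₀ : (ι 0 →₀ R) →ₗ[R] M 0) (hφ₀ : ∀ a, φ₀ (single a 1) ∈ Φ 0 a 0) :
    ∃ φ : ∀ n, (ι n →₀ R) →ₗ[R] M n, φ 0 = φ₀ ∧ (∀ n a, φ n (single a 1) ∈ Φ n a n) ∧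
      ∀ n, φ n ∘ₗ d n = δ n ∘ₗ φ (n + 1) := by
  let IsExtendable (n : ℕ) (φ : (ι n →₀ R) →ₗ[R] M n) : Prop :=
    (∀ a, φ (single a 1) ∈ Φ n a n) ∧
      ∀ a, (φ ∘ₗ d n) (single a 1) ∈ (Φ (n + 1) a (n + 1)).map (δ n)
  have extendable_zero : IsExtendable 0 φ₀ :=
    ⟨hφ₀, fun a => hΦ.acyclic_zero a (hΦ.map_boundary_mem hφ₀ a)⟩
  have exists_extension (n : ℕ) (φ) (hφ : IsExtendable n φ) :
      ∃ φ', IsExtendable (n + 1) φ' ∧ φ ∘ₗ d n = δ n ∘ₗ φ' := by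
    obtain ⟨φ', hφ', hcomm⟩ := exists_comp_eq_of_forall_single_mem_map (δ n) (φ ∘ₗ d n) _ hφ.2
    have cycle : δ n ∘ₗ φ' ∘ₗ d (n + 1) = 0 := by
      rw [← LinearMap.comp_assoc, ← hcomm, LinearMap.comp_assoc, hd, LinearMap.comp_zero]
    exact ⟨φ', ⟨hφ', fun a => hΦ.acyclic_succ n a
      ⟨LinearMap.congr_fun cycle (single a 1), hΦ.map_boundary_mem hφ' a⟩⟩, hcomm⟩
  obtain ⟨φ, hzero, hφ, hcomm⟩ :=
    exists_seq_of_forall_exists_succ φ₀ extendable_zero exists_extension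
  exact ⟨φ, hzero, fun n => (hφ n).1, hcomm⟩

end IsAcyclicCarrier

end AcyclicCarrier

section OrderComplex

variable {P : Type} [Preorder P]

namespace OChain

/-- The order chain `(x > c₀ > c₁ > ⋯)` obtained by adding a new top `x` to the chain `c`; this is
the join of the cone point `x` with `c`. -/
def cons {n : ℕ} (x : P) (c : OChain P n) (h : ∀ i, c.1 i < x) : OChain P (n + 1) :=
  ⟨Fin.cons x c.1, fun i j hij => by
    induction j using Fin.cases with
    | zero => exact absurd hij (Fin.not_lt_zero i)
    | succ j =>
      induction i using Fin.cases with
      | zero => simpa using h j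
      | succ i => simpa using c.2 (Fin.succ_lt_succ_iff.mp hij)⟩

lemma odel_zero_cons {n : ℕ} {x : P} {c : OChain P n} (h : ∀ i, c.1 i < x) :
    odel P 0 (c.cons x h) = c :=
  Subtype.ext (funext fun i => by simp [odel, cons])

lemma odel_succ_cons {n : ℕ} {x : P} {c : OChain P (n + 1)} (h : ∀ i, c.1 i < x)
    (k : Fin (n + 1)) :
    odel P k.succ (c.cons x h) = (odel P k c).cons x fun i => h (k.succAbove i) :=
  Subtype.ext (funext (Fin.cases rfl fun i => by simp [odel, cons, Fin.removeNth]))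

lemma odel_zero_lt {n : ℕ} (c : OChain P (n + 1)) (i : Fin n) : (odel P 0 c).1 i < c.1 0 :=
  c.2 (Fin.succ_pos i)

lemma cons_odel_zero {n : ℕ} (c : OChain P (n + 1)) :
    (odel P 0 c).cons (c.1 0) (odel_zero_lt c) = c :=
  Subtype.ext (Fin.cons_self_tail c.1)

lemma odel_odel_swap {n : ℕ} (c : OChain P (n + 2)) (i : Fin (n + 2)) (j : Fin (n + 1)) :
    odel P (j.predAbove i) (odel P (i.succAbove j) c) = odel P j (odel P i c) :=
  Subtype.ext (funext fun k =>
    congrArg c.1 (Fin.succAbove_succAbove_succAbove_predAbove i j k))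

lemma lowerClosure_range {n : ℕ} (c : OChain P (n + 1)) :
    (lowerClosure (Set.range c.1) : Set P) = Set.Iic (c.1 0) :=
  Set.ext fun _ => ⟨fun ⟨_, ⟨r, hr⟩, hy⟩ => hy.trans (hr ▸ c.2.antitone (Fin.zero_le r)),
    fun hy => ⟨c.1 0, Set.mem_range_self 0, hy⟩⟩

end OChain

variable {K}

lemma cbdry_single {n : ℕ} (c : OChain P (n + 1)) :
    cbdry K P n (single c 1) = ∑ k : Fin (n + 1), (-1 : K) ^ (k : ℕ) • single (odel P k c) 1 := by
  simp only [cbdry, lsum_single, LinearMap.sum_apply, LinearMap.smul_apply, lsingle_apply]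

variable (K P) in
lemma cbdry_comp_cbdry (n : ℕ) : cbdry K P n ∘ₗ cbdry K P (n + 1) = 0 := by
  ext1 c
  ext1
  have expand : cbdry K P n (cbdry K P (n + 1) (single c 1)) =
      ∑ p : Fin (n + 2) × Fin (n + 1),
        (-1 : K) ^ (p.1 + p.2 : ℕ) • single (odel P p.2 (odel P p.1 c)) 1 := by
    simp only [cbdry_single, map_sum, map_smul, Finset.smul_sum, smul_smul, ← pow_add,
      Fintype.sum_prod_type]
  refine expand.trans (Finset.sum_ninvolution (fun p => (p.1.succAbove p.2, p.2.predAbove p.1))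
    (fun p => ?_) (fun p _ h => ?_) (fun _ => Finset.mem_univ _) fun p => ?_)
  · rw [OChain.odel_odel_swap, Fin.neg_one_pow_succAbove_add_predAbove, neg_smul, add_neg_cancel]
  · exact Fin.succAbove_ne _ _ (congrArg Prod.fst h)
  · simp [Fin.succAbove_succAbove_predAbove, Fin.predAbove_predAbove_succAbove]

lemma cbdry_mem_chainsIn {n : ℕ} {J : Set P} {f : CGrp K P (n + 1)}
    (hf : f ∈ chainsIn K P J (n + 1)) : cbdry K P n f ∈ chainsIn K P J n := by
  refine map_mem_of_mem_supported (fun c hc => ?_) hf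
  rw [cbdry_single]
  exact Submodule.sum_mem _ fun k _ => Submodule.smul_mem _ _
    (single_mem_supported K _ fun r => hc (k.succAbove r))

variable (K) in
open Classical in
/-- The cone operator with apex `x`, which adds the top `x` to the order chains in `P_{<x}`. It is
given the value `0` on all other chains, in particular on those with top `x`, where this makes it a
contracting homotopy of the chain complex of `P_{≤x}`. -/
def cone (n : ℕ) (x : P) : CGrp K P n →ₗ[K] CGrp K P (n + 1) :=
  linearCombination K fun c => if h : ∀ i, c.1 i < x then single (c.cons x h) 1 else 0

lemma cone_single {n : ℕ} {x : P} {c : OChain P n} (h : ∀ i, c.1 i < x) :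
    cone K n x (single c 1) = single (c.cons x h) 1 := by
  simp [cone, h]

lemma cone_single_eq_zero {n : ℕ} {x : P} {c : OChain P n} {i : Fin n} (h : ¬ c.1 i < x) :
    cone K n x (single c 1) = 0 := by
  rw [cone, linearCombination_single, one_smul, dif_neg fun hlt => h (hlt i)]

lemma cone_mem_chainsIn {n : ℕ} (x : P) (f : CGrp K P n) :
    cone K n x f ∈ chainsIn K P (Set.Iic x) (n + 1) := by
  refine map_mem_of_forall_single_mem (fun c => ?_) f
  by_cases h : ∀ i, c.1 i < x
  · rw [cone_single h]
    exact single_mem_supported K _ (Fin.cons le_rfl fun i => (h i).le)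
  · obtain ⟨i, hi⟩ := not_forall.mp h
    rw [cone_single_eq_zero hi]
    exact Submodule.zero_mem _

lemma cbdry_cone_zero (x : P) (f : CGrp K P 0) : cbdry K P 0 (cone K 0 x f) = f := by
  suffices cbdry K P 0 ∘ₗ cone K 0 x = LinearMap.id from LinearMap.congr_fun this f
  ext1 c
  ext1
  simp [cone_single fun i : Fin 0 => i.elim0, cbdry_single, OChain.odel_zero_cons]

lemma cbdry_cone_single {n : ℕ} {x : P} {c : OChain P (n + 1)} (h : ∀ i, c.1 i < x) :
    cbdry K P (n + 1) (cone K (n + 1) x (single c 1)) =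
      single c 1 - cone K n x (cbdry K P n (single c 1)) := by
  have cone_cbdry : cone K n x (cbdry K P n (single c 1)) =
      ∑ k : Fin (n + 1), (-1 : K) ^ (k : ℕ) • single (odel P k.succ (c.cons x h)) 1 := by
    simp only [cbdry_single, map_sum, map_smul, OChain.odel_succ_cons]
    exact Finset.sum_congr rfl fun k _ => by rw [cone_single fun i => h (k.succAbove i)]
  rw [cone_single h, cbdry_single, Fin.sum_univ_succ, OChain.odel_zero_cons, cone_cbdry]
  simp [pow_succ, sub_eq_add_neg]

lemma cone_cbdry_single {n : ℕ} (c : OChain P (n + 1)) :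
    cone K n (c.1 0) (cbdry K P n (single c 1)) = single c 1 := by
  have cone_face (k : Fin n) : cone K n (c.1 0) (single (odel P k.succ c) 1) = 0 := by
    obtain ⟨m, rfl⟩ := Nat.exists_eq_succ_of_ne_zero k.pos.ne'
    exact cone_single_eq_zero (i := 0) (lt_irrefl _)
  rw [cbdry_single, map_sum, Fin.sum_univ_succ]
  simp only [map_smul, cone_face]
  simp [cone_single (OChain.odel_zero_lt c), OChain.cons_odel_zero]

end OrderComplex

section PrincipalIdeal

variable {K} {P : Type} [PartialOrder P]

lemma cbdry_cone_add_cone_cbdry {n : ℕ} {x : P} {f : CGrp K P (n + 1)}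
    (hf : f ∈ chainsIn K P (Set.Iic x) (n + 1)) :
    cbdry K P (n + 1) (cone K (n + 1) x f) + cone K n x (cbdry K P n f) = f := by
  suffices Set.EqOn (cbdry K P (n + 1) ∘ₗ cone K (n + 1) x + cone K n x ∘ₗ cbdry K P n)
      LinearMap.id ((fun c => single c 1) '' {c | ∀ r, c.1 r ∈ Set.Iic x}) from
    LinearMap.eqOn_span this (supported_eq_span_single K _ ▸ hf)
  rintro _ ⟨c, hc, rfl⟩
  simp only [LinearMap.add_apply, LinearMap.comp_apply, LinearMap.id_apply]
  obtain rfl | htop := (hc 0).eq_or_lt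
  · rw [cone_single_eq_zero (lt_irrefl (c.1 0)), map_zero, zero_add, cone_cbdry_single]
  · rw [cbdry_cone_single fun i => (c.2.antitone (Fin.zero_le i)).trans_lt htop, sub_add_cancel]

lemma cyclesAt_inf_chainsIn_Iic_le (x : P) (n : ℕ) :
    cyclesAt K P n ⊓ chainsIn K P (Set.Iic x) n ≤
      (chainsIn K P (Set.Iic x) (n + 1)).map (cbdry K P n) := by
  rintro z ⟨hcycle, hz⟩
  refine ⟨cone K n x z, cone_mem_chainsIn x z, ?_⟩
  cases n with
  | zero => exact cbdry_cone_zero x z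
  | succ n => simpa [LinearMap.mem_ker.mp hcycle] using cbdry_cone_add_cone_cbdry hz

lemma idealPart_mono (S : (n : ℕ) → P → Submodule K (CGrp K P (n + 1))) {I J : Set P}
    (h : I ⊆ J) : ∀ n, idealPart K P S I n ≤ idealPart K P S J n
  | 0 => le_rfl
  | _ + 1 => biSup_mono fun _ hx => h hx

namespace SynorComplex

lemma idealPart_le_chainsIn (σ : SynorComplex K P) {J : Set P} (hJ : IsLowerSet J) :
    ∀ n, idealPart K P σ.S J n ≤ chainsIn K P J n
  | 0 => fun _ _ _ _ r => r.elim0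
  | n + 1 => iSup₂_le fun x hx => (σ.graded n x).trans <| supported_mono <| by
      rintro c rfl r
      exact hJ (c.2.antitone (Fin.zero_le r)) hx

lemma cyclesAt_inf_idealPart_Iic_le (σ : SynorComplex K P) (x : P) (n : ℕ) :
    cyclesAt K P n ⊓ idealPart K P σ.S (Set.Iic x) n ≤
      (idealPart K P σ.S (Set.Iic x) (n + 1)).map (cbdry K P n) := fun z hz =>
  have hlower : IsLowerSet (Set.Iic x) := isLowerSet_Iic x
  (σ.quasiIso _ hlower n).2 z hz.2 <|
    cyclesAt_inf_chainsIn_Iic_le x n ⟨hz.1, σ.idealPart_le_chainsIn hlower n hz.2⟩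

end SynorComplex

lemma isAcyclicCarrier_idealPart {S : (n : ℕ) → P → Submodule K (CGrp K P (n + 1))}
    (hS : ∀ x n, cyclesAt K P n ⊓ idealPart K P S (Set.Iic x) n ≤
      (idealPart K P S (Set.Iic x) (n + 1)).map (cbdry K P n)) :
    IsAcyclicCarrier (cbdry K P) (cbdry K P)
      fun _ c => idealPart K P S (lowerClosure (Set.range c.1)) where
  boundary_mem n c := by
    have hc : cbdry K P n (single c 1) ∈ chainsIn K P (Set.range c.1) n :=
      cbdry_mem_chainsIn (single_mem_supported K _ Set.mem_range_self)
    exact supported_mono (fun b hb => idealPart_mono S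
      (LowerSet.coe_subset_coe.mpr (lowerClosure_mono (Set.range_subset_iff.mpr hb))) n) hc
  acyclic_zero c := by
    rw [c.lowerClosure_range]
    exact (le_inf le_top le_rfl).trans (hS (c.1 0) 0)
  acyclic_succ n c := by
    rw [c.lowerClosure_range]
    exact hS (c.1 0) (n + 1)

end PrincipalIdeal

theorem rho_exists_general (P : Type) [PartialOrder P]
    (S : (n : ℕ) → P → Submodule K (CGrp K P (n + 1)))
    (hS : ∀ x n, cyclesAt K P n ⊓ idealPart K P S (Set.Iic x) n ≤
      (idealPart K P S (Set.Iic x) (n + 1)).map (cbdry K P n)) :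
    ∃ ρ : (nn : ℕ) → CGrp K P nn →ₗ[K] CGrp K P nn,
      ρ 0 = LinearMap.id ∧
      (∀ nn : ℕ, ∀ f : CGrp K P nn, ρ nn f ∈ idealPart K P S Set.univ nn) ∧
      (∀ nn : ℕ, (ρ nn).comp (cbdry K P nn) = (cbdry K P nn).comp (ρ (nn + 1))) ∧
      (∀ (nn : ℕ) (c : OChain P (nn + 1)),
        ρ (nn + 1) (Finsupp.single c 1) ∈ ⨆ y ∈ Set.Iic (c.1 0), S nn y) := by
  obtain ⟨ρ, hzero, hcarried, hcomm⟩ := (isAcyclicCarrier_idealPart hS).exists_chainMap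
    (cbdry_comp_cbdry K P) LinearMap.id fun _ => Submodule.mem_top
  have hmem (n : ℕ) (f : CGrp K P n) : ρ n f ∈ idealPart K P S Set.univ n :=
    map_mem_of_forall_single_mem
      (fun c => idealPart_mono S (Set.subset_univ _) n (hcarried n c)) f
  have hsupport (n : ℕ) (c : OChain P (n + 1)) :
      ρ (n + 1) (single c 1) ∈ idealPart K P S (Set.Iic (c.1 0)) (n + 1) :=
    c.lowerClosure_range ▸ hcarried (n + 1) c
  exact ⟨ρ, hzero, hmem, hcomm, hsupport⟩

/-- Let `P` be a finite poset and `S_*(P) ⊆ C̃_*(P)` a synor complex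
for `P`.  Then for each `k ≥ -1` (level `nn = k + 1 ≥ 0`) there is a `K`-linear map
`ρ_k : C̃_k(P) → S_k(P)` (encoded as an endomorphism of `C̃` with range inside `S`) with:
(R0) `ρ₋₁` is the identity on `C̃₋₁(P) = K`;
(R1) `ρ_{k-1} ∘ ∂_k = ∂_k ∘ ρ_k` for all `k ≥ 0`;
(R2) for every order chain `c = (x₀ > ⋯ > x_k)`, `ρ_k(c)` is supported in `P_{≤ x₀}`,
i.e. `ρ_k(c) ∈ ⊕_{y ≤ x₀} S_k(P)^{(y)}`. -/
theorem rho_exists (P : Type) [PartialOrder P] [Fintype P] (σ : SynorComplex K P) :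
    ∃ ρ : (nn : ℕ) → CGrp K P nn →ₗ[K] CGrp K P nn,
      ρ 0 = LinearMap.id ∧
      (∀ nn : ℕ, ∀ f : CGrp K P nn, ρ nn f ∈ idealPart K P σ.S Set.univ nn) ∧
      (∀ nn : ℕ, (ρ nn).comp (cbdry K P nn) = (cbdry K P nn).comp (ρ (nn + 1))) ∧
      (∀ (nn : ℕ) (c : OChain P (nn + 1)),
        ρ (nn + 1) (Finsupp.single c 1) ∈ ⨆ y ∈ Set.Iic (c.1 0), σ.S nn y) := by
  exact rho_exists_general K P σ.S σ.cyclesAt_inf_idealPart_Iic_le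

end
end

section
/- Let L be a finite lattice with minimum 0̂ and maximum 1̂, 0̂ ≠ 1̂; set L̄ = L∖{0̂} and Ľ = L∖{0̂,1̂}. Fix a synor complex S_*(L̄) ⊆ C̃_*(L̄) and maps ρ_k satisfying (R0)–(R2). Let γ = 1̂*ζ ∈ S_m(L̄)^{(1̂)} be a principal synor chain, let 1 ≤ ℓ ≤ m, and let γ = Σ_{χ∈X_ℓ^γ} χ*ζ_χ and γ = Σ_{χ′∈X_{ℓ−1}^γ} χ′*ζ_{χ′} be its ℓ- and (ℓ−1)-representations. Then the two chains Σ_{χ∈X_ℓ^γ} π(ρ_{ℓ−1}(∂_ℓ^{(0)}(χ)) ⧢ ζ_χ) and Σ_{χ′∈X_{ℓ−1}^γ} π(ρ_{ℓ−2}(∂_{ℓ−1}^{(0)}(χ′)) ⧢ ζ_{χ′}) are cycles supported in Ľ, and they are homologous in H̃_{m−1}(Ľ). -/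
open Finsupp

noncomputable section

variable (K : Type) [Field K]

section Repr
variable (P : Type) [PartialOrder P]

/-- Concatenation `χ * c` of two order chains, valid when every entry of `c` is strictly
below every entry of `χ`. -/
def concatOC {a b : ℕ} (χ : OChain P a) (c : OChain P b)
    (h : ∀ (s : Fin b) (r : Fin a), c.1 s < χ.1 r) : OChain P (a + b) :=
  ⟨fun r => if hr : (r : ℕ) < a then χ.1 ⟨r, hr⟩
            else c.1 ⟨(r : ℕ) - a, by have := r.2; omega⟩, by
    intro p q hpq
    dsimp only
    rcases lt_or_ge (q : ℕ) a with hq | hq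
    · have hp : (p : ℕ) < a := by have := Fin.lt_def.mp hpq; omega
      rw [dif_pos hp, dif_pos hq]
      exact χ.2 (Fin.mk_lt_mk.mpr (Fin.lt_def.mp hpq))
    · rw [dif_neg (not_lt.mpr hq)]
      rcases lt_or_ge (p : ℕ) a with hp | hp
      · rw [dif_pos hp]
        exact h _ _
      · rw [dif_neg (not_lt.mpr hp)]
        exact c.2 (Fin.mk_lt_mk.mpr (by have := Fin.lt_def.mp hpq; omega))⟩

open Classical in
/-- The linear map `χ * (-)` prepending the order chain `χ` to every order chain of a
chain (declared as `0` on the basis chains that are not entirely below `χ`). -/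
def prependC {a b : ℕ} (χ : OChain P a) : CGrp K P b →ₗ[K] CGrp K P (a + b) :=
  Finsupp.lsum K fun c =>
    if h : ∀ (s : Fin b) (r : Fin a), c.1 s < χ.1 r then
      Finsupp.lsingle (concatOC P χ c h)
    else 0

/-- `X_ℓ^γ` (for `s = ℓ + 1`): the set of order chains with `s` elements occurring as
initial segments of order chains in the support of `γ`. -/
def initSegs {m : ℕ} (γ : CGrp K P (m + 1)) (s : ℕ) (h : s ≤ m + 1) :
    Set (OChain P s) :=
  {χ | ∃ c ∈ γ.support, ∀ r : Fin s, c.1 (Fin.castLE h r) = χ.1 r}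

end Repr

section Multi
variable (L : Type) [SemilatticeSup L]

/-- Order multichains with `n` entries (length `n - 1`) in the lattice `L`:
weakly decreasing tuples `(c₀ ≥ c₁ ≥ ⋯ ≥ c_{n-1})`. -/
def MChain (n : ℕ) : Type := {c : Fin n → L // Antitone c}

/-- `∂ₖ^{(j)}`: deletion of the `k`-th entry of an order multichain. -/
def mdel {n : ℕ} (k : Fin (n + 1)) (c : MChain L (n + 1)) : MChain L n :=
  ⟨c.1 ∘ k.succAbove, c.2.comp_monotone (Fin.strictMono_succAbove k).monotone⟩

/-- Concatenation `c · c′` of tuples. -/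
def concatT {a b n : ℕ} (h : a + b = n) (u : Fin a → L) (v : Fin b → L) : Fin n → L :=
  fun r => if hr : (r : ℕ) < a then u ⟨r, hr⟩ else v ⟨(r : ℕ) - a, by have := r.2; omega⟩

/-- The operator `τ` sending a tuple `(a₀, …, a_{n-1})` to the multichain
`(a₀ ∨ ⋯ ∨ a_{n-1} ≥ a₁ ∨ ⋯ ∨ a_{n-1} ≥ ⋯ ≥ a_{n-1})` of suffix joins. -/
def tauMul {n : ℕ} (a : Fin n → L) : MChain L n :=
  ⟨fun r => (Finset.Ici r).sup' ⟨r, Finset.mem_Ici.mpr le_rfl⟩ a, by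
    intro r r' hrr'
    apply Finset.sup'_le
    intro s hs
    exact Finset.le_sup' _ (Finset.mem_Ici.mpr (le_trans hrr' (Finset.mem_Ici.mp hs)))⟩

/-- An `(i,j)`-shuffle, in block form: `IsShuffleBlocks t σ` says that the permutation `σ`
is monotone on the preimage of the values `{0, …, t-1}` (the first block) and on the
preimage of the remaining values (the second block).  An `(i,j)`-shuffle of
`{0, 1, …, i+j+1}` is exactly `IsShuffleBlocks (i+1)`. -/
def IsShuffleBlocks {n : ℕ} (t : ℕ) (σ : Equiv.Perm (Fin n)) : Prop :=
  (∀ p q : Fin n, p < q → (σ p : ℕ) < t → (σ q : ℕ) < t → σ p < σ q) ∧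
  (∀ p q : Fin n, p < q → t ≤ (σ p : ℕ) → t ≤ (σ q : ℕ) → σ p < σ q)

/-- The index `ℓ - 1` (with the convention `0 - 1 = 0`). -/
def prevIdx {n : ℕ} (ℓ : Fin n) : Fin n := ⟨(ℓ : ℕ) - 1, by have := ℓ.2; omega⟩

/-- The set `A₁^{i,j}` of pairs `(ℓ, σ)` with `σ` an `(i,j)`-shuffle, `ℓ ≥ 1`,
`σ(ℓ-1) ∈ {0,…,i}` and `σ(ℓ) ∈ {i+1,…,i+j+1}`. -/
def shuffleA1 (i j : ℕ) : Set (Fin (i + j + 2) × Equiv.Perm (Fin (i + j + 2))) :=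
  {p | IsShuffleBlocks (i + 1) p.2 ∧ 1 ≤ (p.1 : ℕ) ∧
       (p.2 (prevIdx p.1) : ℕ) ≤ i ∧ i + 1 ≤ (p.2 p.1 : ℕ)}

/-- The set `A₂^{i,j}` of pairs `(ℓ, σ)` with `σ` an `(i,j)`-shuffle, `ℓ ≥ 1`,
`σ(ℓ-1) ∈ {i+1,…,i+j+1}` and `σ(ℓ) ∈ {0,…,i}`. -/
def shuffleA2 (i j : ℕ) : Set (Fin (i + j + 2) × Equiv.Perm (Fin (i + j + 2))) :=
  {p | IsShuffleBlocks (i + 1) p.2 ∧ 1 ≤ (p.1 : ℕ) ∧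
       i + 1 ≤ (p.2 (prevIdx p.1) : ℕ) ∧ (p.2 p.1 : ℕ) ≤ i}

/-- The set `A₃^{i,j}` of pairs `(ℓ, σ)` with `σ` an `(i,j)`-shuffle and
`σ(ℓ-1), σ(ℓ) ∈ {0,…,i}`, the condition on `σ(ℓ-1)` being regarded as true for `ℓ = 0`. -/
def shuffleA3 (i j : ℕ) : Set (Fin (i + j + 2) × Equiv.Perm (Fin (i + j + 2))) :=
  {p | IsShuffleBlocks (i + 1) p.2 ∧
       (1 ≤ (p.1 : ℕ) → (p.2 (prevIdx p.1) : ℕ) ≤ i) ∧ (p.2 p.1 : ℕ) ≤ i}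

/-- `M̃`: the `K`-vector space with basis the order multichains with `n` entries
(length `n-1`).  In particular `MGrp K L 0 ≅ K` is `M̃₋₁`, spanned by the empty
multichain. -/
abbrev MGrp (n : ℕ) : Type := MChain L n →₀ K

/-- The simplicial boundary `∂ = Σ (-1)^j ∂^{(j)}` on multichains. -/
def mbdry (n : ℕ) : MGrp K L (n + 1) →ₗ[K] MGrp K L n :=
  Finsupp.lsum K fun c => ∑ k : Fin (n + 1), ((-1 : K) ^ (k : ℕ)) • Finsupp.lsingle (mdel L k c)

/-- Transport along an equality of lengths. -/
def castMGrp {a b : ℕ} (h : a = b) : MGrp K L a ≃ₗ[K] MGrp K L b :=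
  Finsupp.domLCongr (Equiv.cast (congrArg (MChain L) h))

open Classical in
/-- The shuffle product of two basis multichains, with `p` resp. `q` entries:
`c ⧢ c′ = Σ_{σ ∈ S_{p-1,q-1}} sgn(σ) · τ((c·c′)_σ)`. -/
def shufPair {p q : ℕ} (c : MChain L p) (c' : MChain L q) : MGrp K L (p + q) :=
  ∑ σ : Equiv.Perm (Fin (p + q)),
    if IsShuffleBlocks p σ then
      ((Equiv.Perm.sign σ : ℤ) : K) • Finsupp.single (tauMul L (concatT L rfl c.1 c'.1 ∘ ⇑σ)) 1
    else 0

/-- The shuffle product `⧢ : M̃_{p-1} ⊗ M̃_{q-1} → M̃_{p+q-1}` as a bilinear map. -/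
def shufLin (p q : ℕ) : MGrp K L p →ₗ[K] MGrp K L q →ₗ[K] MGrp K L (p + q) :=
  Finsupp.lsum K fun c =>
    LinearMap.toSpanSingleton K _
      (Finsupp.lsum K fun c' => LinearMap.toSpanSingleton K _ (shufPair K L c c'))

open Classical in
/-- The projection `π : M̃ → C̃` which is the identity on strictly decreasing multichains
and vanishes on multichains with a repeated entry. -/
def piProj (n : ℕ) : MGrp K L n →ₗ[K] CGrp K L n :=
  Finsupp.lsum K fun c =>
    if h : StrictAnti c.1 then Finsupp.lsingle (⟨c.1, h⟩ : OChain L n) else 0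

/-- The inclusion `C̃ → M̃` of order chains into multichains. -/
def iotaCM (n : ℕ) : CGrp K L n →ₗ[K] MGrp K L n :=
  Finsupp.lmapDomain K K fun c => (⟨c.1, c.2.antitone⟩ : MChain L n)

end Multi

section Punct

/-- Transport of order chains along an equality of lengths. -/
def castOC {P : Type} [Preorder P] {a b : ℕ} (h : a = b) (c : OChain P a) : OChain P b :=
  h ▸ c

/-- `L̄ = L ∖ {0̂}`, the lattice `L` with its bottom element removed.  It is closed under
joins, hence a join-semilattice. -/
abbrev Punct (L : Type) [Lattice L] [OrderBot L] : Type := {y : L // y ≠ ⊥}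

instance instPunctSemilatticeSup (L : Type) [Lattice L] [OrderBot L] :
    SemilatticeSup (Punct L) :=
  Subtype.semilatticeSup (by
    intro x y hx _ h
    exact hx (le_bot_iff.mp (h ▸ le_sup_left)))

end Punct

/-! Regard a chain as the word of its entries.  If `t * z` is a chain with top element `t` whose
boundary avoids `t`, then `∂z = 0`.  The representations of `t * z` are the deconcatenations of
`z` into a prefix of fixed length `k` and a suffix.  Both tensor factors of such a cut are cycles:
the suffixes by assumption, and then the prefixes because `∂z = 0`.  As `∂` is a derivation for the
shuffle product, applying `ρ` to the prefixes and shuffling sends every cut to a cycle.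

For the homology, split `z` so that the letter at position `k` belongs to both the prefix and the
suffix.  For a word `u x v` with `u` of length `k`, this is `u x ⊗ x v`; deleting the two copies of
`x` gives the cuts at `k` and `k + 1` with opposite signs, and the remaining boundary terms
recombine into the boundaries of the tensor factors of the cuts, which vanish.  Hence the shuffle
image of this splitting has as boundary the difference of the two shuffled representations.  Every
word involved stays below the first letter of a word of `z`, hence below `t`. -/

section ShufflePermutations
open Equiv
variable {M : Type*} [AddCommMonoid M] {n p : ℕ}

/-- The permutation of `Fin (n + 1)` with first value `k` whose remaining values are arranged
according to `e`. -/
def permCons (k : Fin (n + 1)) (e : Perm (Fin n)) : Perm (Fin (n + 1)) :=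
  k.cycleRange.symm * Perm.decomposeFin.symm (0, e)

@[simp] lemma permCons_zero (k : Fin (n + 1)) (e : Perm (Fin n)) : permCons k e 0 = k := by
  simp [permCons]

@[simp] lemma permCons_succ (k : Fin (n + 1)) (e : Perm (Fin n)) (i : Fin n) :
    permCons k e i.succ = k.succAbove (e i) := by
  simp [permCons]

lemma sign_permCons (k : Fin (n + 1)) (e : Perm (Fin n)) :
    Perm.sign (permCons k e) = (-1) ^ (k : ℕ) * Perm.sign e := by
  simp [permCons, Fin.sign_cycleRange, Perm.decomposeFin.symm_sign]

lemma permCons_bijective (n : ℕ) :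
    Function.Bijective fun x : Fin (n + 1) × Perm (Fin n) => permCons x.1 x.2 := by
  refine (Fintype.bijective_iff_injective_and_card _).mpr
    ⟨?_, Fintype.card_congr Perm.decomposeFin.symm⟩
  rintro ⟨k, e⟩ ⟨k', e'⟩ h
  obtain rfl : k = k' := by simpa using congrArg (fun s : Perm (Fin (n + 1)) => s 0) h
  refine Prod.ext rfl (Equiv.ext fun i => ?_)
  simpa using congrArg (fun s : Perm (Fin (n + 1)) => s i.succ) h

lemma sum_perm_succ (F : Perm (Fin (n + 1)) → M) :
    ∑ s, F s = ∑ k : Fin (n + 1), ∑ e : Perm (Fin n), F (permCons k e) := by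
  rw [← Fintype.sum_prod_type']
  exact ((permCons_bijective n).sum_comp F).symm

lemma isShuffleBlocks_iff {s : Perm (Fin n)} :
    IsShuffleBlocks p s ↔ ∀ i j, i < j → ((s i : ℕ) < p ↔ (s j : ℕ) < p) → s i < s j := by
  refine ⟨fun h i j hij hp => ?_, fun h => ⟨fun i j hij hi hj => h i j hij (by tauto),
    fun i j hij hi hj => h i j hij (by omega)⟩⟩
  rcases lt_or_ge (s i : ℕ) p with hi | hi
  · exact h.1 i j hij hi (hp.mp hi)
  · exact h.2 i j hij hi (not_lt.mp fun hj => hi.not_gt (hp.mpr hj))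

lemma isShuffleBlocks_iff_eq_one {s : Perm (Fin n)} (hp : p = 0 ∨ p = n) :
    IsShuffleBlocks p s ↔ s = 1 := by
  rw [isShuffleBlocks_iff]
  refine ⟨fun h => ?_, fun h i j hij _ => by simpa [h] using hij⟩
  have hmono : StrictMono s := fun i j hij => h i j hij (by omega)
  exact Equiv.ext (congrFun ((hmono.range_inj strictMono_id).mp (by simp [s.surjective.range_eq])))

lemma isShuffleBlocks_permCons_iff {k : Fin (n + 1)} {e : Perm (Fin n)} :
    IsShuffleBlocks p (permCons k e) ↔
      (∀ i, ((k : ℕ) < p ↔ (k.succAbove (e i) : ℕ) < p) → k ≤ (e i).castSucc) ∧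
      ∀ i j, i < j →
        ((k.succAbove (e i) : ℕ) < p ↔ (k.succAbove (e j) : ℕ) < p) → e i < e j := by
  simp [isShuffleBlocks_iff, Fin.forall_fin_succ, Fin.lt_succAbove_iff_le_castSucc]

lemma isShuffleBlocks_permCons_zero_iff {e : Perm (Fin n)} :
    IsShuffleBlocks (p + 1) (permCons 0 e) ↔ IsShuffleBlocks p e := by
  rw [isShuffleBlocks_permCons_iff, isShuffleBlocks_iff]
  simp

lemma val_succAbove_lt_iff (k : Fin (n + 1)) (i : Fin n) :
    (k.succAbove i : ℕ) < k ↔ (i : ℕ) < k := by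
  rw [← Fin.lt_def, Fin.succAbove_lt_iff_castSucc_lt]
  rfl

lemma isShuffleBlocks_permCons_self_iff {k : Fin (n + 1)} {e : Perm (Fin n)} :
    IsShuffleBlocks k (permCons k e) ↔ IsShuffleBlocks k e := by
  rw [isShuffleBlocks_permCons_iff, isShuffleBlocks_iff]
  simp only [val_succAbove_lt_iff, lt_self_iff_false, false_iff, not_lt]
  exact ⟨And.right, fun h => ⟨fun _ hi => Fin.le_def.mpr hi, h⟩⟩

lemma eq_zero_or_eq_of_isShuffleBlocks_permCons {k : Fin (n + 1)} {e : Perm (Fin n)} (hp : p ≤ n)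
    (h : IsShuffleBlocks p (permCons k e)) : (k : ℕ) = 0 ∨ (k : ℕ) = p := by
  have hfirst (l : Fin (n + 1)) (hkl : (k : ℕ) < p ↔ (l : ℕ) < p) : k ≤ l := by
    obtain ⟨i, rfl⟩ := (permCons k e).surjective l
    rw [isShuffleBlocks_iff] at h
    rcases (Fin.zero_le i).eq_or_lt with rfl | hi
    · simp
    · simpa using (h 0 i hi (by simpa using hkl)).le
  have h0 := hfirst 0
  have hp := hfirst ⟨p, by omega⟩
  simp only [Fin.le_def, Fin.val_zero] at h0 hp
  omega

open Classical in
lemma sum_shuffles_of_trivial_block (hp : p = 0 ∨ p = n) (F : Perm (Fin n) → M) :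
    (∑ s, if IsShuffleBlocks p s then F s else 0) = F 1 := by
  simp [isShuffleBlocks_iff_eq_one hp]

open Classical in
lemma sum_shuffles_succ {k : Fin (n + 1)} (hk : (k : ℕ) = p + 1) (F : Perm (Fin (n + 1)) → M) :
    (∑ s, if IsShuffleBlocks (p + 1) s then F s else 0) =
      (∑ e, if IsShuffleBlocks p e then F (permCons 0 e) else 0) +
        ∑ e, if IsShuffleBlocks (p + 1) e then F (permCons k e) else 0 := by
  have hk0 : k ≠ 0 := fun h => by simp [h] at hk
  rw [sum_perm_succ, Fintype.sum_eq_add 0 k hk0.symm]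
  · simp only [isShuffleBlocks_permCons_zero_iff]
    simp only [← hk, isShuffleBlocks_permCons_self_iff]
  · rintro l ⟨hl0, hlk⟩
    refine Finset.sum_eq_zero fun e _ => if_neg fun hs => ?_
    rcases eq_zero_or_eq_of_isShuffleBlocks_permCons (by omega) hs with h | h
    · exact hl0 (Fin.ext h)
    · exact hlk (Fin.ext (h.trans hk.symm))

end ShufflePermutations

section Concatenation
open Equiv
variable {P : Type} {p q n : ℕ}

lemma concatT_zero_left (h : 0 + q = n) (c : Fin 0 → P) (c' : Fin q → P) :
    concatT P h c c' = c' ∘ Fin.cast (by omega) :=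
  rfl

lemma concatT_zero_right (h : p + 0 = n) (c : Fin p → P) (c' : Fin 0 → P) :
    concatT P h c c' = c ∘ Fin.cast (by omega) :=
  funext fun r => dif_pos (by omega)

lemma concatT_comp_permCons_zero (h : p + 1 + q = n + 1) (h' : p + q = n)
    (c : Fin (p + 1) → P) (c' : Fin q → P) (e : Perm (Fin n)) :
    concatT P h c c' ∘ permCons 0 e = Fin.cons (c 0) (concatT P h' (Fin.tail c) c' ∘ e) := by
  funext r
  induction r using Fin.cases with
  | zero => simp [concatT]
  | succ r =>
    simp only [Function.comp_apply, permCons_succ, Fin.zero_succAbove, Fin.cons_succ, concatT,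
      Fin.val_succ, Nat.add_lt_add_iff_right, Nat.add_sub_add_right, Fin.tail]
    rfl

lemma concatT_comp_succAbove (h : p + (q + 1) = n + 1) (h' : p + q = n)
    (c : Fin p → P) (c' : Fin (q + 1) → P) {k : Fin (n + 1)} (hk : (k : ℕ) = p) :
    concatT P h c c' ∘ k.succAbove = concatT P h' c (Fin.tail c') := by
  funext r
  rcases lt_or_ge (r : ℕ) p with hr | hr
  · have hval : (k.succAbove r : ℕ) = r := by
      rw [Fin.succAbove_of_castSucc_lt _ _ (Fin.lt_def.mpr (hr.trans_eq hk.symm)), Fin.val_castSucc]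
    simp [concatT, hval, hr]
  · have hval : (k.succAbove r : ℕ) = r + 1 := by
      rw [Fin.succAbove_of_le_castSucc _ _ (Fin.le_def.mpr (hk.trans_le hr)), Fin.val_succ]
    have hidx : (r : ℕ) + 1 - p = r - p + 1 := by omega
    simp [concatT, hval, hr.not_gt, (hr.trans (Nat.le_succ _)).not_gt, hidx, Fin.tail]

lemma concatT_comp_permCons_self (h : p + (q + 1) = n + 1) (h' : p + q = n)
    (c : Fin p → P) (c' : Fin (q + 1) → P) (e : Perm (Fin n)) {k : Fin (n + 1)}
    (hk : (k : ℕ) = p) :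
    concatT P h c c' ∘ permCons k e = Fin.cons (c' 0) (concatT P h' c (Fin.tail c') ∘ e) := by
  funext r
  induction r using Fin.cases with
  | zero => simp [concatT, hk]
  | succ r => simp [← concatT_comp_succAbove h h' c c' hk]

end Concatenation

section SuffixJoins
open Equiv
variable {P : Type} [SemilatticeSup P] {p q n : ℕ}

lemma tauMul_apply_le_iff {t : Fin n → P} {r : Fin n} {x : P} :
    (tauMul P t).1 r ≤ x ↔ ∀ s, r ≤ s → t s ≤ x :=
  (Finset.sup'_le_iff ⟨r, Finset.mem_Ici.mpr le_rfl⟩ t).trans (by simp)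

lemma le_tauMul_apply (t : Fin n → P) {r s : Fin n} (h : r ≤ s) : t s ≤ (tauMul P t).1 r :=
  tauMul_apply_le_iff.mp le_rfl s h

lemma tauMul_of_antitone {t : Fin n → P} (ht : Antitone t) : (tauMul P t).1 = t :=
  funext fun _ => le_antisymm (tauMul_apply_le_iff.mpr fun _ hs => ht hs)
    (le_tauMul_apply t le_rfl)

lemma tauMul_succ (t : Fin (n + 1) → P) (r : Fin n) :
    (tauMul P t).1 r.succ = (tauMul P (Fin.tail t)).1 r := by
  refine eq_of_forall_ge_iff fun x => ?_
  simp [tauMul_apply_le_iff, Fin.forall_fin_succ, Fin.tail]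

lemma tauMul_concatT_zero (h : p + 1 + (q + 1) = n + 1) {c : Fin (p + 1) → P}
    {c' : Fin (q + 1) → P} (hc : Antitone c) (hc' : Antitone c') (s : Perm (Fin (n + 1))) :
    (tauMul P (concatT P h c c' ∘ s)).1 0 = c 0 ⊔ c' 0 := by
  refine le_antisymm (tauMul_apply_le_iff.mpr fun r _ => ?_) (sup_le ?_ ?_)
  · simp only [Function.comp_apply, concatT]
    split_ifs
    · exact le_sup_of_le_left (hc (Fin.zero_le _))
    · exact le_sup_of_le_right (hc' (Fin.zero_le _))
  · simpa [concatT] using le_tauMul_apply (concatT P h c c' ∘ s) (Fin.zero_le (s.symm 0))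
  · simpa [concatT] using
      le_tauMul_apply (concatT P h c c' ∘ s) (Fin.zero_le (s.symm ⟨p + 1, by omega⟩))

lemma ofFn_tauMul_concatT (h : p + 1 + (q + 1) = n + 1) {c : Fin (p + 1) → P}
    {c' : Fin (q + 1) → P} (hc : Antitone c) (hc' : Antitone c') (s : Perm (Fin (n + 1))) :
    List.ofFn (tauMul P (concatT P h c c' ∘ s)).1 =
      (c 0 ⊔ c' 0) :: List.ofFn (tauMul P (Fin.tail (concatT P h c c' ∘ s))).1 := by
  simp [List.ofFn_succ, tauMul_concatT_zero h hc hc', tauMul_succ]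

end SuffixJoins

open scoped TensorProduct

/-- Formal `R`-linear combinations of words in the alphabet `P`.  Order chains and multichains of
all lengths are treated uniformly as the words of their entries. -/
abbrev WordChain (R P : Type*) [CommRing R] : Type _ := List P →₀ R

namespace WordChain

section Supported
variable {R M α : Type*} [CommRing R] [AddCommGroup M] [Module R M] {s : Set α}

lemma map_mem_of_supported {F : (α →₀ R) →ₗ[R] M} {p : Submodule R M}
    (h : ∀ w ∈ s, F (single w 1) ∈ p) {f : α →₀ R} (hf : f ∈ supported R R s) : F f ∈ p := by
  rw [supported_eq_span_single] at hf
  exact Submodule.span_le (p := p.comap F).mpr (Set.image_subset_iff.mpr h) hf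

lemma map_eq_of_supported {F G : (α →₀ R) →ₗ[R] M}
    (h : ∀ w ∈ s, F (single w 1) = G (single w 1)) {f : α →₀ R} (hf : f ∈ supported R R s) :
    F f = G f := by
  rw [supported_eq_span_single] at hf
  exact LinearMap.eqOn_span (Set.forall_mem_image.mpr h) hf

end Supported

section Boundary
variable {R P : Type*} [CommRing R]

/-- Prepending a letter to every word. -/
def cons (x : P) : WordChain R P →ₗ[R] WordChain R P := lmapDomain R R (List.cons x)

/-- The boundary of a word, the alternating sum of its letter deletions. -/
def bdryWord : List P → WordChain R P
  | [] => 0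
  | x :: w => single w 1 - cons x (bdryWord w)

/-- The simplicial boundary of combinations of words. -/
def bdry : WordChain R P →ₗ[R] WordChain R P := linearCombination R bdryWord

/-- The grading involution, acting on the words of length `n` as multiplication by `(-1) ^ n`. -/
def gsign : WordChain R P →ₗ[R] WordChain R P :=
  linearCombination R fun w => (-1 : R) ^ w.length • single w 1

@[simp] lemma cons_single (x : P) (w : List P) (r : R) :
    cons x (single w r) = single (x :: w) r := by
  simp [cons]

@[simp] lemma bdry_single (w : List P) : bdry (single w (1 : R)) = bdryWord w := by
  simp [bdry]

@[simp] lemma gsign_single (w : List P) :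
    gsign (single w (1 : R)) = (-1 : R) ^ w.length • single w 1 := by
  rw [gsign, linearCombination_single, one_smul]

lemma bdry_cons (x : P) (f : WordChain R P) : bdry (cons x f) = f - cons x (bdry f) := by
  have h : bdry ∘ₗ cons x = LinearMap.id - cons (R := R) x ∘ₗ bdry := by
    ext1 w; ext1; simp [bdryWord]
  exact LinearMap.congr_fun h f

lemma gsign_cons (x : P) (f : WordChain R P) : gsign (cons x f) = -cons x (gsign f) := by
  have h : gsign ∘ₗ cons x = -cons (R := R) x ∘ₗ gsign := by
    ext1 w; ext1; simp [pow_succ, -smul_single]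
  exact LinearMap.congr_fun h f

lemma gsign_bdryWord (w : List P) :
    gsign (bdryWord w : WordChain R P) = -((-1 : R) ^ w.length • bdryWord w) := by
  induction w with
  | nil => simp [bdryWord]
  | cons x w ih =>
    simp only [bdryWord, map_sub, gsign_single, gsign_cons, ih, List.length_cons, pow_succ,
      smul_sub, map_neg, map_smul, neg_neg, mul_neg, mul_one, neg_smul]
    abel

end Boundary

section Splitting
variable {R P : Type*} [CommRing R]

/-- Concatenation of words as a bilinear map. -/
def append : WordChain R P →ₗ[R] WordChain R P →ₗ[R] WordChain R P :=
  linearCombination R fun u => lmapDomain R R (u ++ ·)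

@[simp] lemma append_single (u v : List P) :
    append (single u (1 : R)) (single v 1) = single (u ++ v) 1 := by
  simp [append]

lemma append_nil_left (f : WordChain R P) : append (single [] 1) f = f := by
  have h : append (single [] 1) = LinearMap.id (R := R) (M := WordChain R P) := by
    ext1 w; ext1; simp
  exact LinearMap.congr_fun h f

lemma append_nil_right (f : WordChain R P) : append f (single [] 1) = f := by
  have h : append.flip (single [] 1) = LinearMap.id (R := R) (M := WordChain R P) := by
    ext1 w; ext1; simp
  exact LinearMap.congr_fun h f

lemma append_cons_left (x : P) (f g : WordChain R P) :
    append (cons x f) g = cons x (append f g) := by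
  have h : append ∘ₗ cons x = append.compr₂ (cons (R := R) x) := by
    ext1 u; ext1; ext1 v; ext1; simp
  exact LinearMap.congr_fun₂ h f g

lemma append_singleton_left (x : P) (f : WordChain R P) : append (single [x] 1) f = cons x f := by
  rw [← cons_single, append_cons_left, append_nil_left]

lemma bdryWord_append (u v : List P) :
    (bdryWord (u ++ v) : WordChain R P) =
      append (bdryWord u) (single v 1) +
        (-1 : R) ^ u.length • append (single u 1) (bdryWord v) := by
  induction u with
  | nil => simp [bdryWord, append_nil_left]
  | cons x u ih =>
    simp only [List.cons_append, bdryWord, ih, ← cons_single, append_cons_left, append_single,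
      map_add, map_sub, map_smul, LinearMap.sub_apply, List.length_cons, pow_succ, mul_neg,
      mul_one, neg_smul]
    abel

/-- The deconcatenation of words into the prefix of length `k` and the remaining suffix. -/
def cut (k : ℕ) : WordChain R P →ₗ[R] WordChain R P ⊗[R] WordChain R P :=
  linearCombination R fun w => single (w.take k) 1 ⊗ₜ single (w.drop k) 1

/-- The splitting of words into a prefix of length `k + 1` and a suffix which share the letter
at position `k`. -/
def overlap (k : ℕ) : WordChain R P →ₗ[R] WordChain R P ⊗[R] WordChain R P :=
  linearCombination R fun w => single (w.take (k + 1)) 1 ⊗ₜ single (w.drop k) 1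

@[simp] lemma cut_single (k : ℕ) (w : List P) :
    cut k (single w (1 : R)) = single (w.take k) 1 ⊗ₜ single (w.drop k) 1 := by
  simp [cut]

@[simp] lemma overlap_single (k : ℕ) (w : List P) :
    overlap k (single w (1 : R)) = single (w.take (k + 1)) 1 ⊗ₜ single (w.drop k) 1 := by
  simp [overlap]

/-- The boundary of the second tensor factor, with the sign of the first tensor factor. -/
def signedRightBdry : WordChain R P ⊗[R] WordChain R P →ₗ[R] WordChain R P ⊗[R] WordChain R P :=
  TensorProduct.map gsign bdry

/-- The boundary of the tensor product of two complexes of words. -/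
def tensorBdry : WordChain R P ⊗[R] WordChain R P →ₗ[R] WordChain R P ⊗[R] WordChain R P :=
  bdry.rTensor _ + signedRightBdry

@[simp] lemma tensorBdry_tmul (f g : WordChain R P) :
    tensorBdry (f ⊗ₜ[R] g) = bdry f ⊗ₜ g + gsign f ⊗ₜ bdry g :=
  rfl

lemma signedRightBdry_eq_zero {t : WordChain R P ⊗[R] WordChain R P}
    (ht : bdry.lTensor (WordChain R P) t = 0) : signedRightBdry t = 0 := by
  rw [signedRightBdry, ← LinearMap.rTensor_comp_lTensor, LinearMap.comp_apply, ht, map_zero]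

lemma cut_zero (f : WordChain R P) : cut 0 f = single [] 1 ⊗ₜ f := by
  have h : cut 0 = TensorProduct.mk R (WordChain R P) (WordChain R P) (single [] 1) := by
    ext1 w; ext1; simp
  exact LinearMap.congr_fun h f

lemma cut_succ_cons (k : ℕ) (x : P) (f : WordChain R P) :
    cut (k + 1) (cons x f) = (cons x).rTensor _ (cut k f) := by
  have h : cut (k + 1) ∘ₗ cons x = (cons (R := R) x).rTensor _ ∘ₗ cut k := by
    ext1 w; ext1; simp
  exact LinearMap.congr_fun h f

lemma cut_append_single {u : List P} {k : ℕ} (hu : u.length = k) (f : WordChain R P) :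
    cut k (append (single u 1) f) = single u 1 ⊗ₜ f := by
  have h : cut k ∘ₗ append (single u 1) =
      TensorProduct.mk R (WordChain R P) (WordChain R P) (single u 1) := by
    ext1 w; ext1
    simp [List.take_left' hu, List.drop_left' hu]
  exact LinearMap.congr_fun h f

lemma cut_bdryWord (k : ℕ) (w : List P) :
    cut k (bdryWord w : WordChain R P) =
      bdryWord (w.take (k + 1)) ⊗ₜ single (w.drop (k + 1)) 1 +
        cut k (append (gsign (single (w.take (k + 1)) 1)) (bdryWord (w.drop (k + 1)))) := by
  induction k generalizing w with
  | zero =>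
    cases w with
    | nil => simp [bdryWord]
    | cons x w =>
      simp [bdryWord, append_singleton_left, cut_zero, TensorProduct.tmul_add,
        TensorProduct.tmul_neg, sub_eq_add_neg]
  | succ k ih =>
    cases w with
    | nil => simp [bdryWord]
    | cons x w =>
      rw [List.take_succ_cons, List.drop_succ_cons, ← cons_single, gsign_cons, map_neg,
        LinearMap.neg_apply, append_cons_left, map_neg, cut_succ_cons, bdryWord, bdryWord, map_sub,
        cut_succ_cons, ih, map_add, cut_single, LinearMap.rTensor_tmul, TensorProduct.sub_tmul]
      abel

lemma cut_bdry (k : ℕ) (f : WordChain R P) :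
    cut k (bdry f) = bdry.rTensor _ (cut (k + 1) f) +
      cut k (TensorProduct.lift append (signedRightBdry (cut (k + 1) f))) := by
  have h : cut k ∘ₗ bdry = bdry.rTensor _ ∘ₗ cut (k + 1) +
      cut k ∘ₗ TensorProduct.lift append ∘ₗ signedRightBdry (R := R) (P := P) ∘ₗ cut (k + 1) := by
    ext1 w; ext1
    simp [cut_bdryWord, signedRightBdry, -gsign_single]
  exact LinearMap.congr_fun h f

/-- Appending the first letter of the second word to the first word. -/
def prolongFirst : WordChain R P ⊗[R] WordChain R P →ₗ[R] WordChain R P ⊗[R] WordChain R P :=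
  (TensorProduct.lift append).rTensor _ ∘ₗ (TensorProduct.assoc R _ _ _).symm.toLinearMap ∘ₗ
    (overlap 0).lTensor _

/-- Prepending the letters of the first word from position `k` on to the second word. -/
def prolongSecond (k : ℕ) :
    WordChain R P ⊗[R] WordChain R P →ₗ[R] WordChain R P ⊗[R] WordChain R P :=
  (TensorProduct.lift append).lTensor _ ∘ₗ (TensorProduct.assoc R _ _ _).toLinearMap ∘ₗ
    (overlap k).rTensor _

lemma prolongFirst_tmul_single (f : WordChain R P) (v : List P) :
    prolongFirst (f ⊗ₜ[R] single v 1) = append f (single (v.take 1) 1) ⊗ₜ single v 1 := by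
  simp [prolongFirst]

lemma prolongSecond_single_tmul (k : ℕ) (u : List P) (g : WordChain R P) :
    prolongSecond k (single u 1 ⊗ₜ[R] g) =
      single (u.take (k + 1)) 1 ⊗ₜ append (single (u.drop k) 1) g := by
  simp [prolongSecond]

lemma tensorBdry_overlap_single_of_length_le {k : ℕ} {w : List P} (hw : w.length ≤ k) :
    tensorBdry (overlap k (single w (1 : R))) =
      prolongFirst (bdry.rTensor _ (cut k (single w 1))) +
        (-1 : R) ^ k • (cut k (single w 1) +
          prolongSecond k (bdry.lTensor _ (cut (k + 1) (single w 1)))) +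
        (-1 : R) ^ (k + 1) • cut (k + 1) (single w 1) := by
  have hw' : w.length ≤ k + 1 := hw.trans k.le_succ
  simp only [overlap_single, cut_single, List.take_of_length_le, List.drop_of_length_le, hw, hw',
    tensorBdry_tmul, LinearMap.rTensor_tmul, LinearMap.lTensor_tmul, bdry_single, bdryWord,
    prolongFirst_tmul_single, List.take_nil, append_nil_right, TensorProduct.tmul_zero, map_zero]
  module

lemma tensorBdry_overlap_single_of_lt_length {k : ℕ} {w : List P} (hw : k < w.length) :
    tensorBdry (overlap k (single w (1 : R))) =
      prolongFirst (bdry.rTensor _ (cut k (single w 1))) +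
        (-1 : R) ^ k • (cut k (single w 1) +
          prolongSecond k (bdry.lTensor _ (cut (k + 1) (single w 1)))) +
        (-1 : R) ^ (k + 1) • cut (k + 1) (single w 1) := by
  obtain ⟨u, x, v, rfl, rfl⟩ : ∃ u x v, w = u ++ x :: v ∧ u.length = k :=
    ⟨w.take k, w[k], w.drop (k + 1), by simp, by simpa using hw.le⟩
  have htake : (u ++ x :: v).take (u.length + 1) = u ++ [x] := by simp [List.take_append]
  have hdrop : (u ++ x :: v).drop (u.length + 1) = v := by simp [List.drop_append]
  have hfull : (u ++ [x]).take (u.length + 1) = u ++ [x] := List.take_of_length_le (by simp)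
  simp only [overlap_single, cut_single, htake, hdrop, hfull, List.take_left, List.drop_left,
    tensorBdry_tmul, LinearMap.rTensor_tmul, LinearMap.lTensor_tmul, bdry_single, gsign_single,
    bdryWord_append, prolongFirst_tmul_single, prolongSecond_single_tmul, append_singleton_left,
    List.take_succ_cons, List.take_zero, List.length_append, List.length_singleton,
    bdryWord, append_single, List.append_nil, map_zero, sub_zero, TensorProduct.add_tmul,
    TensorProduct.tmul_sub, ← TensorProduct.smul_tmul']
  module

lemma tensorBdry_overlap (k : ℕ) (f : WordChain R P) :
    tensorBdry (overlap k f) = prolongFirst (bdry.rTensor _ (cut k f)) +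
      (-1 : R) ^ k • (cut k f + prolongSecond k (bdry.lTensor _ (cut (k + 1) f))) +
      (-1 : R) ^ (k + 1) • cut (k + 1) f := by
  have h : tensorBdry ∘ₗ overlap k = prolongFirst ∘ₗ bdry.rTensor (WordChain R P) ∘ₗ cut k +
      (-1 : R) ^ k • (cut k + prolongSecond k ∘ₗ bdry.lTensor (WordChain R P) ∘ₗ cut (k + 1)) +
      (-1 : R) ^ (k + 1) • cut (k + 1) := by
    ext1 w; ext1
    rcases le_or_gt w.length k with hw | hw
    · exact tensorBdry_overlap_single_of_length_le hw
    · exact tensorBdry_overlap_single_of_lt_length hw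
  exact LinearMap.congr_fun h f

variable {z : WordChain R P}

lemma rTensor_bdry_cut_eq_zero (hz : bdry z = 0) {k : ℕ}
    (hk : bdry.lTensor (WordChain R P) (cut k z) = 0) :
    bdry.rTensor (WordChain R P) (cut k z) = 0 := by
  cases k with
  | zero => simp [cut_zero, bdryWord]
  | succ k => simpa [hz, signedRightBdry_eq_zero hk] using (cut_bdry k z).symm

lemma tensorBdry_cut_eq_zero (hz : bdry z = 0) {k : ℕ}
    (hk : bdry.lTensor (WordChain R P) (cut k z) = 0) : tensorBdry (cut k z) = 0 := by
  simp [tensorBdry, rTensor_bdry_cut_eq_zero hz hk, signedRightBdry_eq_zero hk]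

lemma tensorBdry_overlap_of_cycle (hz : bdry z = 0) {k : ℕ}
    (hk : bdry.lTensor (WordChain R P) (cut k z) = 0)
    (hk' : bdry.lTensor (WordChain R P) (cut (k + 1) z) = 0) :
    tensorBdry (overlap k z) = (-1 : R) ^ k • cut k z + (-1 : R) ^ (k + 1) • cut (k + 1) z := by
  rw [tensorBdry_overlap, rTensor_bdry_cut_eq_zero hz hk, hk', map_zero, map_zero, add_zero,
    zero_add]

end Splitting

section Shuffle
variable {R P : Type*} [CommRing R] [Max P]

/-- The shuffle product of two words.  The recursion is on the first entry of the result, which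
`τ` makes the join of the first letters of both factors. -/
def shuffleWord : List P → List P → WordChain R P
  | [], v => single v 1
  | x :: u, [] => single (x :: u) 1
  | x :: u, y :: v =>
    cons (x ⊔ y) (shuffleWord u (y :: v) + (-1 : R) ^ (u.length + 1) • shuffleWord (x :: u) v)
  termination_by u v => u.length + v.length

/-- The shuffle product of combinations of words. -/
def shuffle : WordChain R P →ₗ[R] WordChain R P →ₗ[R] WordChain R P :=
  linearCombination R fun u => linearCombination R (shuffleWord u)

@[simp] lemma shuffle_single (u v : List P) :
    shuffle (single u (1 : R)) (single v 1) = shuffleWord u v := by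
  simp [shuffle]

lemma shuffleWord_nil_right (u : List P) : (shuffleWord u [] : WordChain R P) = single u 1 := by
  cases u <;> rw [shuffleWord]

@[simp] lemma shuffle_nil_left (g : WordChain R P) : shuffle (single [] 1) g = g := by
  have h : shuffle (single [] 1) = LinearMap.id (R := R) (M := WordChain R P) := by
    ext1 w; ext1; simp [shuffleWord]
  exact LinearMap.congr_fun h g

@[simp] lemma shuffle_nil_right (f : WordChain R P) : shuffle f (single [] 1) = f := by
  have h : shuffle.flip (single [] 1) = LinearMap.id (R := R) (M := WordChain R P) := by
    ext1 w; ext1; simp [shuffleWord_nil_right]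
  exact LinearMap.congr_fun h f

lemma shuffle_cons_cons (x y : P) (f g : WordChain R P) :
    shuffle (cons x f) (cons y g) =
      cons (x ⊔ y) (shuffle f (cons y g) + shuffle (gsign (cons x f)) g) := by
  have h : shuffle.compl₁₂ (cons x) (cons y) =
      (shuffle.compl₂ (cons y) + shuffle ∘ₗ (gsign ∘ₗ cons x)).compr₂ (cons (R := R) (x ⊔ y)) := by
    ext1 u; ext1; ext1 v; ext1
    simp [shuffleWord, -smul_single]
  exact LinearMap.congr_fun₂ h f g

lemma bdry_shuffleWord (u v : List P) :
    bdry (shuffleWord u v : WordChain R P) = shuffle (bdryWord u) (single v 1) +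
      (-1 : R) ^ u.length • shuffle (single u 1) (bdryWord v) := by
  induction u, v using shuffleWord.induct with
  | case1 v => simp [shuffleWord, bdryWord]
  | case2 x u => simp [shuffleWord, bdryWord]
  | case3 x u y v ih₁ ih₂ =>
    have hleft : shuffle (cons x (bdryWord u)) (single (y :: v) (1 : R)) =
        cons (x ⊔ y) (shuffle (bdryWord u) (single (y :: v) 1) +
          (-1 : R) ^ u.length • shuffle (cons x (bdryWord u)) (single v 1)) := by
      rw [← cons_single y, shuffle_cons_cons, gsign_cons, gsign_bdryWord,
        map_neg (cons (R := R) x), neg_neg, map_smul, map_smul, LinearMap.smul_apply]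
    have hright : shuffle (single (x :: u) (1 : R)) (cons y (bdryWord v)) =
        cons (x ⊔ y) (shuffle (single u 1) (cons y (bdryWord v)) +
          (-1 : R) ^ (u.length + 1) • shuffle (single (x :: u) 1) (bdryWord v)) := by
      rw [← cons_single x, shuffle_cons_cons, cons_single, gsign_single, map_smul,
        LinearMap.smul_apply, List.length_cons]
    rw [shuffleWord, bdry_cons, map_add, map_smul, ih₁, ih₂]
    simp only [bdryWord, map_sub, LinearMap.sub_apply, List.length_cons, hleft, hright,
      shuffle_single, map_add, map_smul]
    module

lemma bdry_shuffle (f g : WordChain R P) :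
    bdry (shuffle f g) = shuffle (bdry f) g + shuffle (gsign f) (bdry g) := by
  have h : (shuffle (P := P)).compr₂ bdry =
      shuffle ∘ₗ bdry + shuffle.compl₁₂ gsign (bdry (R := R)) := by
    ext1 u; ext1; ext1 v; ext1
    simp [bdry_shuffleWord, -smul_single]
  exact LinearMap.congr_fun₂ h f g

/-- The shuffle product of the two tensor factors, after `φ` has been applied to the first. -/
def shuffleVia (φ : WordChain R P →ₗ[R] WordChain R P) :
    WordChain R P ⊗[R] WordChain R P →ₗ[R] WordChain R P :=
  TensorProduct.lift (shuffle ∘ₗ φ)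

@[simp] lemma shuffleVia_tmul (φ : WordChain R P →ₗ[R] WordChain R P) (f g : WordChain R P) :
    shuffleVia φ (f ⊗ₜ g) = shuffle (φ f) g :=
  rfl

variable {φ : WordChain R P →ₗ[R] WordChain R P}

lemma bdry_shuffleVia_tmul {f : WordChain R P} (hbdry : bdry (φ f) = φ (bdry f))
    (hsign : gsign (φ f) = φ (gsign f)) (g : WordChain R P) :
    bdry (shuffleVia φ (f ⊗ₜ g)) = shuffleVia φ (tensorBdry (f ⊗ₜ g)) := by
  simp [bdry_shuffle, hbdry, hsign]

variable {s : Set (List P)} {z : WordChain R P} (k : ℕ)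

lemma bdry_shuffleVia_cut (hz : z ∈ supported R R s)
    (hbdry : ∀ w ∈ s, bdry (φ (single (w.take k) 1)) = φ (bdry (single (w.take k) 1)))
    (hsign : ∀ w ∈ s, gsign (φ (single (w.take k) 1)) = φ (gsign (single (w.take k) 1))) :
    bdry (shuffleVia φ (cut k z)) = shuffleVia φ (tensorBdry (cut k z)) := by
  refine map_eq_of_supported (F := bdry ∘ₗ shuffleVia φ ∘ₗ cut k)
    (G := shuffleVia φ ∘ₗ tensorBdry ∘ₗ cut k) (fun w hw => ?_) hz
  simpa only [LinearMap.comp_apply, cut_single] using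
    bdry_shuffleVia_tmul (hbdry w hw) (hsign w hw) _

lemma bdry_shuffleVia_overlap (hz : z ∈ supported R R s)
    (hbdry : ∀ w ∈ s,
      bdry (φ (single (w.take (k + 1)) 1)) = φ (bdry (single (w.take (k + 1)) 1)))
    (hsign : ∀ w ∈ s,
      gsign (φ (single (w.take (k + 1)) 1)) = φ (gsign (single (w.take (k + 1)) 1))) :
    bdry (shuffleVia φ (overlap k z)) = shuffleVia φ (tensorBdry (overlap k z)) := by
  refine map_eq_of_supported (F := bdry ∘ₗ shuffleVia φ ∘ₗ overlap k)
    (G := shuffleVia φ ∘ₗ tensorBdry ∘ₗ overlap k) (fun w hw => ?_) hz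
  simpa only [LinearMap.comp_apply, overlap_single] using
    bdry_shuffleVia_tmul (hbdry w hw) (hsign w hw) _

end Shuffle

section Degenerate
variable {R P : Type*} [CommRing R]

open Classical in
/-- The projection killing the words with two equal adjacent letters; on multichains this is
the projection `π`. -/
def nondeg : WordChain R P →ₗ[R] WordChain R P :=
  linearCombination R fun w => if w.IsChain (· ≠ ·) then single w 1 else 0

lemma nondeg_single_of_isChain {w : List P} (hw : w.IsChain (· ≠ ·)) :
    nondeg (single w (1 : R)) = single w 1 := by
  simp [nondeg, hw]

lemma nondeg_single_of_not_isChain {w : List P} (hw : ¬w.IsChain (· ≠ ·)) :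
    nondeg (single w (1 : R)) = 0 := by
  simp [nondeg, hw]

lemma nondeg_cons_nondeg (x : P) (f : WordChain R P) :
    nondeg (cons x (nondeg f)) = nondeg (cons x f) := by
  have h : nondeg ∘ₗ cons x ∘ₗ nondeg = nondeg ∘ₗ cons (R := R) x := by
    ext1 w; ext1
    by_cases hw : w.IsChain (· ≠ ·)
    · simp [nondeg_single_of_isChain hw]
    · have hxw : ¬(x :: w).IsChain (· ≠ ·) := fun h => hw h.tail
      simp [nondeg_single_of_not_isChain hw, nondeg_single_of_not_isChain hxw]
  exact LinearMap.congr_fun h f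

lemma nondeg_cons_cons_self (x : P) (f : WordChain R P) : nondeg (cons x (cons x f)) = 0 := by
  have h : nondeg ∘ₗ cons (R := R) x ∘ₗ cons x = 0 := by
    ext1 w; ext1
    have hw : ¬(x :: x :: w).IsChain (· ≠ ·) := by simp
    simp [nondeg_single_of_not_isChain hw]
  exact LinearMap.congr_fun h f

lemma nondeg_bdryWord_of_not_isChain {w : List P} (hw : ¬w.IsChain (· ≠ ·)) :
    nondeg (bdryWord w : WordChain R P) = 0 := by
  induction w with
  | nil => simp at hw
  | cons x w ih =>
    cases w with
    | nil => simp at hw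
    | cons y t =>
      by_cases hxy : x = y
      · subst hxy
        simp [bdryWord, nondeg_cons_cons_self]
      · have ht : ¬(y :: t).IsChain (· ≠ ·) := fun ht =>
          hw (List.isChain_cons_cons.mpr ⟨hxy, ht⟩)
        rw [bdryWord, map_sub, nondeg_single_of_not_isChain ht, ← nondeg_cons_nondeg, ih ht]
        simp

lemma nondeg_bdry_nondeg (f : WordChain R P) :
    nondeg (bdry (nondeg f)) = nondeg (bdry f) := by
  have h : nondeg ∘ₗ bdry ∘ₗ nondeg = nondeg ∘ₗ bdry (R := R) (P := P) := by
    ext1 w; ext1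
    by_cases hw : w.IsChain (· ≠ ·)
    · simp [nondeg_single_of_isChain hw]
    · simp [nondeg_single_of_not_isChain hw, nondeg_bdryWord_of_not_isChain hw]
  exact LinearMap.congr_fun h f

end Degenerate

section OrderChains
variable {K} {P : Type} [Preorder P] {n : ℕ}

/-- The combination of words underlying a combination of order chains. -/
def ofCGrp : CGrp K P n →ₗ[K] WordChain K P := lmapDomain K K fun c => List.ofFn c.1

@[simp] lemma ofCGrp_single (c : OChain P n) (a : K) :
    ofCGrp (single c a) = single (List.ofFn c.1) a := by
  simp [ofCGrp]

lemma ofCGrp_injective : Function.Injective (ofCGrp (K := K) (P := P) (n := n)) :=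
  mapDomain_injective fun _ _ h => Subtype.ext (List.ofFn_injective h)

lemma bdryWord_ofFn {R α : Type*} [CommRing R] {n : ℕ} (c : Fin (n + 1) → α) :
    (bdryWord (List.ofFn c) : WordChain R α) = ∑ k : Fin (n + 1),
      (-1 : R) ^ (k : ℕ) • single (List.ofFn (c ∘ k.succAbove)) 1 := by
  induction n with
  | zero => simp [bdryWord]
  | succ n ih =>
    rw [List.ofFn_succ, bdryWord, ih, map_sum, sub_eq_add_neg, ← Finset.sum_neg_distrib]
    conv_rhs => rw [Fin.sum_univ_succ]
    congr 1
    · simp [Function.comp_def]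
    · refine Finset.sum_congr rfl fun k _ => ?_
      rw [List.ofFn_succ (f := c ∘ k.succ.succAbove)]
      simp [pow_succ, Function.comp_def]

lemma ofCGrp_cbdry (f : CGrp K P (n + 1)) : ofCGrp (cbdry K P n f) = bdry (ofCGrp f) := by
  have h : ofCGrp ∘ₗ cbdry K P n = bdry ∘ₗ ofCGrp := by
    ext1 c; ext1
    simp only [LinearMap.comp_apply, lsingle_apply, ofCGrp_single, bdry_single, bdryWord_ofFn,
      cbdry, lsum_single, LinearMap.sum_apply, LinearMap.smul_apply, map_sum, map_smul]
    rfl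
  exact LinearMap.congr_fun h f

lemma ofCGrp_castCGrp {n' : ℕ} (h : n = n') (f : CGrp K P n) :
    ofCGrp (castCGrp K P h f) = ofCGrp f := by
  subst h
  simp [castCGrp]

lemma nondeg_single_of_sortedGT {R : Type*} [CommRing R] {w : List P} (hw : w.SortedGT) :
    nondeg (single w (1 : R)) = single w 1 :=
  nondeg_single_of_isChain (hw.isChain.imp fun _ _ => ne_of_gt)

lemma nondeg_ofCGrp (f : CGrp K P n) : nondeg (ofCGrp f) = ofCGrp f := by
  have h : nondeg ∘ₗ ofCGrp = ofCGrp (K := K) (P := P) (n := n) := by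
    ext1 c; ext1
    simpa using nondeg_single_of_sortedGT c.2.sortedGT_ofFn
  exact LinearMap.congr_fun h f

lemma gsign_ofCGrp (f : CGrp K P n) : gsign (ofCGrp f) = (-1 : K) ^ n • ofCGrp f := by
  have h : gsign ∘ₗ ofCGrp = (-1 : K) ^ n • ofCGrp (K := K) (P := P) (n := n) := by
    ext1 c; ext1; simp
  exact LinearMap.congr_fun h f

end OrderChains

section Multichains
variable {K} {P : Type} [SemilatticeSup P] {n : ℕ}

/-- The combination of words underlying a combination of multichains. -/
def ofMGrp : MGrp K P n →ₗ[K] WordChain K P := lmapDomain K K fun c => List.ofFn c.1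

@[simp] lemma ofMGrp_single (c : MChain P n) (a : K) :
    ofMGrp (single c a) = single (List.ofFn c.1) a := by
  simp [ofMGrp]

lemma ofMGrp_castMGrp {n' : ℕ} (h : n = n') (f : MGrp K P n) :
    ofMGrp (castMGrp K P h f) = ofMGrp f := by
  subst h
  simp [castMGrp]

lemma ofMGrp_iotaCM (f : CGrp K P n) : ofMGrp (iotaCM K P n f) = ofCGrp f :=
  (mapDomain_comp (v := f)).symm

lemma isChain_ne_ofFn_iff {c : Fin n → P} (hc : Antitone c) :
    (List.ofFn c).IsChain (· ≠ ·) ↔ StrictAnti c := by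
  rw [← List.sortedGT_ofFn_iff, List.sortedGT_iff_isChain, List.isChain_ofFn, List.isChain_ofFn]
  exact forall₂_congr fun i hi =>
    ⟨fun h => lt_of_le_of_ne (hc (Fin.mk_le_mk.mpr i.le_succ)) h.symm, ne_of_gt⟩

lemma ofCGrp_piProj (f : MGrp K P n) : ofCGrp (piProj K P n f) = nondeg (ofMGrp f) := by
  have h : ofCGrp ∘ₗ piProj K P n = nondeg ∘ₗ ofMGrp := by
    ext1 c; ext1
    have hiff := isChain_ne_ofFn_iff c.2
    by_cases hc : StrictAnti c.1
    · simp only [LinearMap.comp_apply, lsingle_apply, piProj, lsum_single, dif_pos hc,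
        ofMGrp_single, nondeg_single_of_isChain (hiff.mpr hc)]
      exact ofCGrp_single _ _
    · simp [piProj, hc, nondeg_single_of_not_isChain (hiff.not.mpr hc)]
  exact LinearMap.congr_fun h f

end Multichains

section ShuffleTerms
open Equiv
variable {R : Type*} [CommRing R] {P : Type} [SemilatticeSup P] {p q n : ℕ}

/-- The signed word of suffix joins contributed by the permutation `s` to the shuffle product of
`c` and `c'`. -/
def shuffleTerm (h : p + q = n) (c : Fin p → P) (c' : Fin q → P) (s : Perm (Fin n)) :
    WordChain R P :=
  ((Perm.sign s : ℤ) : R) • single (List.ofFn (tauMul P (concatT P h c c' ∘ s)).1) 1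

lemma shuffleTerm_permCons_zero (h : p + 1 + (q + 1) = n + 1) (h' : p + (q + 1) = n)
    {c : Fin (p + 1) → P} {c' : Fin (q + 1) → P} (hc : Antitone c) (hc' : Antitone c')
    (e : Perm (Fin n)) :
    shuffleTerm (R := R) h c c' (permCons 0 e) =
      cons (c 0 ⊔ c' 0) (shuffleTerm h' (Fin.tail c) c' e) := by
  rw [shuffleTerm, ofFn_tauMul_concatT h hc hc', concatT_comp_permCons_zero h h', Fin.tail_cons]
  simp [shuffleTerm, sign_permCons]

lemma shuffleTerm_permCons_self (h : p + 1 + (q + 1) = n + 1) (h' : p + 1 + q = n)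
    {c : Fin (p + 1) → P} {c' : Fin (q + 1) → P} (hc : Antitone c) (hc' : Antitone c')
    (e : Perm (Fin n)) {k : Fin (n + 1)} (hk : (k : ℕ) = p + 1) :
    shuffleTerm (R := R) h c c' (permCons k e) =
      (-1 : R) ^ (p + 1) • cons (c 0 ⊔ c' 0) (shuffleTerm h' c (Fin.tail c') e) := by
  rw [shuffleTerm, ofFn_tauMul_concatT h hc hc', concatT_comp_permCons_self h h' _ _ _ hk,
    Fin.tail_cons]
  simp [shuffleTerm, sign_permCons, hk]

open Classical in
lemma sum_shuffleTerm (h : p + q = n) {c : Fin p → P} {c' : Fin q → P}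
    (hc : Antitone c) (hc' : Antitone c') :
    (∑ s : Perm (Fin n), if IsShuffleBlocks p s then shuffleTerm (R := R) h c c' s else 0) =
      shuffleWord (List.ofFn c) (List.ofFn c') := by
  induction n generalizing p q with
  | zero =>
    obtain ⟨rfl, rfl⟩ : p = 0 ∧ q = 0 := by omega
    rw [sum_shuffles_of_trivial_block (.inl rfl)]
    simp [shuffleTerm, shuffleWord]
  | succ n ih =>
    rcases p with _ | p
    · obtain rfl : q = n + 1 := by omega
      rw [sum_shuffles_of_trivial_block (.inl rfl), shuffleTerm, concatT_zero_left]
      simp [tauMul_of_antitone hc', shuffleWord]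
    rcases q with _ | q
    · obtain rfl : p = n := by omega
      rw [sum_shuffles_of_trivial_block (.inr rfl), shuffleTerm, concatT_zero_right]
      simp [tauMul_of_antitone hc, shuffleWord_nil_right, -List.ofFn_succ]
    have h₁ : p + (q + 1) = n := by omega
    have h₂ : p + 1 + q = n := by omega
    have htail : Antitone (Fin.tail c) := fun i j hij => hc (Fin.succ_le_succ_iff.mpr hij)
    have htail' : Antitone (Fin.tail c') := fun i j hij => hc' (Fin.succ_le_succ_iff.mpr hij)
    have hk : ((⟨p + 1, by omega⟩ : Fin (n + 1)) : ℕ) = p + 1 := rfl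
    have hword : (shuffleWord (List.ofFn c) (List.ofFn c') : WordChain R P) =
        cons (c 0 ⊔ c' 0) (shuffleWord (List.ofFn (Fin.tail c)) (List.ofFn c') +
          (-1 : R) ^ (p + 1) • shuffleWord (List.ofFn c) (List.ofFn (Fin.tail c'))) := by
      rw [List.ofFn_succ (f := c), List.ofFn_succ (f := c'), shuffleWord, List.length_ofFn]
      rfl
    rw [sum_shuffles_succ hk, hword, ← ih h₁ htail hc', ← ih h₂ hc htail']
    simp only [shuffleTerm_permCons_zero h h₁ hc hc', shuffleTerm_permCons_self h h₂ hc hc' _ hk,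
      map_add, map_smul, map_sum, Finset.smul_sum, apply_ite (cons (c 0 ⊔ c' 0)), map_zero,
      smul_ite, smul_zero]

end ShuffleTerms

section ShuffleProduct
variable {K} {P : Type} [SemilatticeSup P] {p q n : ℕ}

lemma ofMGrp_shufPair (c : MChain P p) (c' : MChain P q) :
    ofMGrp (shufPair K P c c') = shuffleWord (List.ofFn c.1) (List.ofFn c'.1) := by
  rw [← sum_shuffleTerm rfl c.2 c'.2, shufPair, map_sum]
  refine Finset.sum_congr rfl fun s _ => ?_
  rw [apply_ite ofMGrp, map_zero, map_smul, ofMGrp_single, shuffleTerm]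

lemma ofMGrp_shufLin (f : MGrp K P p) (g : MGrp K P q) :
    ofMGrp (shufLin K P p q f g) = shuffle (ofMGrp f) (ofMGrp g) := by
  have h : (shufLin K P p q).compr₂ ofMGrp = shuffle.compl₁₂ ofMGrp ofMGrp := by
    ext1 c; ext1; ext1 c'; ext1
    simp [shufLin, ofMGrp_shufPair]
  exact LinearMap.congr_fun₂ h f g

lemma ofCGrp_piProj_shufLin (h : p + q = n) (f : CGrp K P p) (g : CGrp K P q) :
    ofCGrp (piProj K P n (castMGrp K P h
      (shufLin K P p q (iotaCM K P p f) (iotaCM K P q g)))) =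
    nondeg (shuffle (ofCGrp f) (ofCGrp g)) := by
  rw [ofCGrp_piProj, ofMGrp_castMGrp, ofMGrp_shufLin, ofMGrp_iotaCM, ofMGrp_iotaCM]

end ShuffleProduct

section Letters
variable {R P : Type*} [CommRing R] {J : Set P}

variable (R) in
/-- The combinations of words with all letters in `J`. -/
abbrev lettersIn (J : Set P) : Submodule R (WordChain R P) :=
  supported R R {w : List P | ∀ y ∈ w, y ∈ J}

lemma lettersIn_mono {J' : Set P} (h : J ⊆ J') : lettersIn R J ≤ lettersIn R J' :=
  supported_mono fun _ hw y hy => h (hw y hy)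

lemma cons_mem_lettersIn {x : P} (hx : x ∈ J) {f : WordChain R P} (hf : f ∈ lettersIn R J) :
    cons x f ∈ lettersIn R J := by
  refine map_mem_of_supported (fun w hw => ?_) hf
  rw [cons_single]
  exact single_mem_supported R 1 (List.forall_mem_cons.mpr ⟨hx, hw⟩)

lemma eq_zero_of_cons_mem_lettersIn {x : P} (hx : x ∉ J) {f : WordChain R P}
    (hf : cons x f ∈ lettersIn R J) : f = 0 := by
  ext w
  have h : cons x f (x :: w) = 0 :=
    (mem_supported' R _).mp hf _ fun h => hx (h x List.mem_cons_self)
  rwa [cons, lmapDomain_apply, mapDomain_apply List.cons_injective] at h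

lemma nondeg_mem_lettersIn {f : WordChain R P} (hf : f ∈ lettersIn R J) :
    nondeg f ∈ lettersIn R J := by
  refine map_mem_of_supported (fun w hw => ?_) hf
  by_cases h : w.IsChain (· ≠ ·)
  · rw [nondeg_single_of_isChain h]
    exact single_mem_supported R 1 hw
  · rw [nondeg_single_of_not_isChain h]
    exact Submodule.zero_mem _

lemma shuffleWord_mem_lettersIn [SemilatticeSup P] (hJ : SupClosed J) {u v : List P}
    (hu : ∀ y ∈ u, y ∈ J) (hv : ∀ y ∈ v, y ∈ J) : shuffleWord u v ∈ lettersIn R J := by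
  induction u, v using shuffleWord.induct with
  | case1 v =>
    rw [shuffleWord]
    exact single_mem_supported R 1 hv
  | case2 x u =>
    rw [shuffleWord]
    exact single_mem_supported R 1 hu
  | case3 x u y v ihu ihv =>
    rw [shuffleWord]
    simp only [List.forall_mem_cons] at hu hv ihu ihv
    exact cons_mem_lettersIn (hJ hu.1 hv.1)
      (Submodule.add_mem _ (ihu hu.2 hv) (Submodule.smul_mem _ _ (ihv hu hv.2)))

lemma shuffle_mem_lettersIn [SemilatticeSup P] (hJ : SupClosed J) {f g : WordChain R P}
    (hf : f ∈ lettersIn R J) (hg : g ∈ lettersIn R J) : shuffle f g ∈ lettersIn R J := by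
  refine map_mem_of_supported (F := shuffle.flip g) (fun u hu => ?_) hf
  refine map_mem_of_supported (F := shuffle (single u 1)) (fun v hv => ?_) hg
  rw [shuffle_single]
  exact shuffleWord_mem_lettersIn hJ hu hv

end Letters

section ChainMap
variable {K} {P : Type} [Preorder P] {n : ℕ}

lemma ofCGrp_mem_lettersIn_iff {J : Set P} {f : CGrp K P n} :
    ofCGrp f ∈ lettersIn K J ↔ f ∈ chainsIn K P J n := by
  refine ⟨fun h => (mem_supported' K _).mpr fun c hc => ?_, fun h => ?_⟩
  · have hw : ofCGrp f (List.ofFn c.1) = 0 :=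
      (mem_supported' K _).mp h _ fun hJ => hc (List.forall_mem_ofFn_iff.mp hJ)
    rwa [ofCGrp, lmapDomain_apply, mapDomain_apply (f := fun c : OChain P n => List.ofFn c.1)
      fun _ _ h => Subtype.ext (List.ofFn_injective h)] at hw
  · refine map_mem_of_supported (fun c hc => ?_) h
    rw [ofCGrp_single]
    exact single_mem_supported K 1 (List.forall_mem_ofFn_iff.mpr hc)

lemma chainsIn_zero (J : Set P) : chainsIn K P J 0 = ⊤ := by
  rw [chainsIn, ← supported_univ]
  exact congrArg _ (Set.eq_univ_of_forall fun _ r => r.elim0)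

lemma bdry_ofCGrp_eq_zero {f : CGrp K P n} (hf : f ∈ cyclesAt K P n) : bdry (ofCGrp f) = 0 := by
  cases n with
  | zero =>
    have h : bdry ∘ₗ ofCGrp (K := K) (P := P) (n := 0) = 0 := by
      ext1 c; ext1
      simp [bdryWord]
    exact LinearMap.congr_fun h f
  | succ n => rw [← ofCGrp_cbdry, LinearMap.mem_ker.mp hf, map_zero]

lemma mem_cyclesAt_of_ofCGrp_eq_nondeg {f : CGrp K P n} {g : WordChain K P}
    (hf : ofCGrp f = nondeg g) (hg : bdry g = 0) : f ∈ cyclesAt K P n := by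
  cases n with
  | zero => exact Submodule.mem_top
  | succ n =>
    refine LinearMap.mem_ker.mpr (ofCGrp_injective ?_)
    rw [map_zero, ← nondeg_ofCGrp, ofCGrp_cbdry, hf, nondeg_bdry_nondeg, hg, map_zero]

/-- A strictly decreasing word, regarded as an order chain. -/
def chainOfWord {w : List P} (hw : w.SortedGT) : OChain P w.length :=
  ⟨w.get, hw.strictAnti_get⟩

lemma ofFn_chainOfWord {w : List P} (hw : w.SortedGT) : List.ofFn (chainOfWord hw).1 = w :=
  List.ofFn_get w

lemma exists_ofCGrp_single_eq {w : List P} (hw : w.SortedGT) (hn : w.length = n) :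
    ∃ c : OChain P n, ofCGrp (single c (1 : K)) = single w 1 := by
  subst hn
  exact ⟨chainOfWord hw, by rw [ofCGrp_single, ofFn_chainOfWord]⟩

open Classical in
/-- The action on words of a family of endomorphisms of the chain groups. -/
def wordMap (ρ : (n : ℕ) → CGrp K P n →ₗ[K] CGrp K P n) : WordChain K P →ₗ[K] WordChain K P :=
  linearCombination K fun w =>
    if h : w.SortedGT then ofCGrp (ρ w.length (single (chainOfWord h) 1)) else 0

variable {ρ : (n : ℕ) → CGrp K P n →ₗ[K] CGrp K P n}

lemma wordMap_single_of_ofFn_eq {w : List P} {c : OChain P n} (hw : List.ofFn c.1 = w) :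
    wordMap ρ (single w 1) = ofCGrp (ρ n (single c 1)) := by
  obtain rfl : w.length = n := by rw [← hw, List.length_ofFn]
  have hsorted : w.SortedGT := hw ▸ c.2.sortedGT_ofFn
  obtain rfl : chainOfWord hsorted = c :=
    Subtype.ext (List.ofFn_injective ((ofFn_chainOfWord hsorted).trans hw.symm))
  rw [wordMap, linearCombination_single, one_smul, dif_pos hsorted]

lemma wordMap_ofCGrp (f : CGrp K P n) : wordMap ρ (ofCGrp f) = ofCGrp (ρ n f) := by
  have h : wordMap ρ ∘ₗ ofCGrp = ofCGrp ∘ₗ ρ n := by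
    ext1 c; ext1
    simpa using wordMap_single_of_ofFn_eq rfl
  exact LinearMap.congr_fun h f

lemma gsign_wordMap_ofCGrp (f : CGrp K P n) :
    gsign (wordMap ρ (ofCGrp f)) = wordMap ρ (gsign (ofCGrp f)) := by
  rw [wordMap_ofCGrp, gsign_ofCGrp, gsign_ofCGrp, map_smul, wordMap_ofCGrp]

lemma bdry_wordMap_ofCGrp
    (hρ : ∀ n, (ρ n).comp (cbdry K P n) = (cbdry K P n).comp (ρ (n + 1))) (f : CGrp K P n) :
    bdry (wordMap ρ (ofCGrp f)) = wordMap ρ (bdry (ofCGrp f)) := by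
  rw [wordMap_ofCGrp]
  cases n with
  | zero =>
    rw [bdry_ofCGrp_eq_zero Submodule.mem_top, bdry_ofCGrp_eq_zero Submodule.mem_top, map_zero]
  | succ n =>
    rw [← ofCGrp_cbdry, ← ofCGrp_cbdry, wordMap_ofCGrp]
    exact congrArg ofCGrp (LinearMap.congr_fun (hρ n) f).symm

lemma wordMap_mem_lettersIn
    (hρ : ∀ (n : ℕ) (c : OChain P (n + 1)),
      ρ (n + 1) (single c 1) ∈ chainsIn K P (Set.Iic (c.1 0)) (n + 1))
    {x : P} {w : List P} (hw : w.SortedGT) (hx : ∀ y ∈ w, y ≤ x) :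
    wordMap ρ (single w 1) ∈ lettersIn K (Set.Iic x) := by
  rw [wordMap_single_of_ofFn_eq (ofFn_chainOfWord hw), ofCGrp_mem_lettersIn_iff]
  cases w with
  | nil => exact (chainsIn_zero (K := K) _).ge Submodule.mem_top
  | cons y w =>
    exact supported_mono (fun d hd r => (hd r).trans (hx y List.mem_cons_self)) (hρ _ _)

end ChainMap

section Representation
variable {K} {P : Type}

/-- Deletion of the first letter of every word; the empty word is kept. -/
def tail : WordChain K P →ₗ[K] WordChain K P := lmapDomain K K List.tail

lemma tail_single (w : List P) (a : K) : tail (single w a) = single w.tail a :=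
  mapDomain_single

lemma ofFn_odel_zero [Preorder P] {n : ℕ} (c : OChain P (n + 1)) :
    List.ofFn (odel P 0 c).1 = (List.ofFn c.1).tail := by
  rw [List.ofFn_succ, List.tail_cons]
  rfl

variable [PartialOrder P]

lemma ofFn_concatOC {a b : ℕ} (χ : OChain P a) (c : OChain P b) (h : ∀ s r, c.1 s < χ.1 r) :
    List.ofFn (concatOC P χ c h).1 = List.ofFn χ.1 ++ List.ofFn c.1 := by
  refine List.ext_getElem (by simp) fun i h₁ h₂ => ?_
  simp [concatOC, List.getElem_append]

lemma prependC_single {a b : ℕ} {χ : OChain P a} {c : OChain P b} (h : ∀ s r, c.1 s < χ.1 r) :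
    prependC K P χ (single c 1) = single (concatOC P χ c h) 1 := by
  simp only [prependC, lsum_single, dif_pos h, lsingle_apply]

lemma tail_ofCGrp_prependC {k b : ℕ} {χ : OChain P (k + 1)} {z : CGrp K P b}
    (hz : z ∈ supported K K {c : OChain P b | ∀ s r, c.1 s < χ.1 r}) :
    tail (ofCGrp (prependC K P χ z)) =
      append (single (List.ofFn (odel P 0 χ).1) 1) (ofCGrp z) := by
  refine map_eq_of_supported (F := tail ∘ₗ ofCGrp ∘ₗ prependC K P χ)
    (G := append (single (List.ofFn (odel P 0 χ).1) 1) ∘ₗ ofCGrp) (fun c hc => ?_) hz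
  have hne : List.ofFn χ.1 ≠ [] := by simp
  simp only [LinearMap.comp_apply, prependC_single hc, ofCGrp_single, ofFn_concatOC,
    ofFn_odel_zero, tail_single, List.tail_append_of_ne_nil hne, append_single]

/-- `γ = ∑ χ ∈ X, χ * Z χ`, where `χ` runs over order chains with `k + 1` elements and `Z χ` is a
cycle below `χ`. The `k`-representation of a principal synor chain `γ` is the case in which `X`
consists of the initial segments of `γ`. -/
structure IsRepresentation {k b m : ℕ} (h : k + 1 + b = m + 1) (γ : CGrp K P (m + 1))
    (X : Finset (OChain P (k + 1))) (Z : OChain P (k + 1) → CGrp K P b) : Prop where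
  cycle : ∀ χ ∈ X, Z χ ∈ cyclesAt K P b
  below : ∀ χ ∈ X, Z χ ∈ supported K K {c : OChain P b | ∀ s r, c.1 s < χ.1 r}
  eq_sum : γ = ∑ χ ∈ X, castCGrp K P h (prependC K P χ (Z χ))

namespace IsRepresentation
variable {k b m : ℕ} {h : k + 1 + b = m + 1} {γ : CGrp K P (m + 1)}
  {X : Finset (OChain P (k + 1))} {Z : OChain P (k + 1) → CGrp K P b}

lemma cut_tail (hX : IsRepresentation h γ X Z) :
    cut k (tail (ofCGrp γ)) =
      ∑ χ ∈ X, ofCGrp (single (odel P 0 χ) 1) ⊗ₜ[K] ofCGrp (Z χ) := by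
  conv_lhs => rw [hX.eq_sum]
  simp only [map_sum, ofCGrp_castCGrp]
  refine Finset.sum_congr rfl fun χ hχ => ?_
  rw [tail_ofCGrp_prependC (hX.below χ hχ), cut_append_single List.length_ofFn, ofCGrp_single]

lemma lTensor_bdry_cut_tail (hX : IsRepresentation h γ X Z) :
    bdry.lTensor (WordChain K P) (cut k (tail (ofCGrp γ))) = 0 := by
  rw [hX.cut_tail, map_sum]
  refine Finset.sum_eq_zero fun χ hχ => ?_
  rw [LinearMap.lTensor_tmul, bdry_ofCGrp_eq_zero (hX.cycle χ hχ), TensorProduct.tmul_zero]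

end IsRepresentation

end Representation

section ShuffledRepresentation
variable {K} {P : Type} [SemilatticeSup P] (ρ : (n : ℕ) → CGrp K P n →ₗ[K] CGrp K P n)
  {k b m : ℕ}

/-- The chain `∑ χ ∈ X, π(ρ(∂⁽⁰⁾ χ) ⧢ Z χ)` attached to a representation `γ = ∑ χ ∈ X, χ * Z χ`. -/
def shuffledRepresentation (h : k + b = m) (X : Finset (OChain P (k + 1)))
    (Z : OChain P (k + 1) → CGrp K P b) : CGrp K P m :=
  ∑ χ ∈ X, piProj K P m (castMGrp K P h (shufLin K P k b
    (iotaCM K P k (ρ k (single (odel P 0 χ) 1))) (iotaCM K P b (Z χ))))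

lemma ofCGrp_shuffledRepresentation {h : k + 1 + b = m + 1} {γ : CGrp K P (m + 1)}
    {X : Finset (OChain P (k + 1))} {Z : OChain P (k + 1) → CGrp K P b}
    (hX : IsRepresentation h γ X Z) (h' : k + b = m) :
    ofCGrp (shuffledRepresentation ρ h' X Z) =
      nondeg (shuffleVia (wordMap ρ) (cut k (tail (ofCGrp γ)))) := by
  rw [hX.cut_tail, shuffledRepresentation, map_sum, map_sum, map_sum]
  refine Finset.sum_congr rfl fun χ _ => ?_
  rw [ofCGrp_piProj_shufLin, shuffleVia_tmul, wordMap_ofCGrp]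

end ShuffledRepresentation

section Principal
variable {K} {P : Type} [Preorder P] {m : ℕ} {t : P} {γ : CGrp K P (m + 1)}

/-- The words of the strictly decreasing chains with `m` elements below `t`. -/
def chainWords (m : ℕ) (t : P) : Set (List P) :=
  {w | w.length = m ∧ w.SortedGT ∧ ∀ y ∈ w, y < t}

lemma ofFn_tail_mem_chainWords {c : OChain P (m + 1)} (hc : c.1 0 = t) :
    (List.ofFn c.1).tail ∈ chainWords m t := by
  have hsorted := c.2.sortedGT_ofFn.pairwise
  refine ⟨by simp, hsorted.tail.sortedGT, ?_⟩
  rw [List.ofFn_succ, List.pairwise_cons, hc] at hsorted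
  rw [List.ofFn_succ]
  exact hsorted.1

lemma tail_ofCGrp_mem_supported_chainWords (hγ : γ ∈ supported K K {c | c.1 0 = t}) :
    tail (ofCGrp γ) ∈ supported K K (chainWords m t) := by
  refine map_mem_of_supported (F := tail ∘ₗ ofCGrp) (fun c hc => ?_) hγ
  rw [LinearMap.comp_apply, ofCGrp_single, tail_single]
  exact single_mem_supported K 1 (ofFn_tail_mem_chainWords hc)

lemma cons_tail_ofCGrp (hγ : γ ∈ supported K K {c | c.1 0 = t}) :
    cons t (tail (ofCGrp γ)) = ofCGrp γ := by
  refine map_eq_of_supported (F := cons t ∘ₗ tail ∘ₗ ofCGrp) (fun c hc => ?_) hγ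
  rw [LinearMap.comp_apply, LinearMap.comp_apply, ofCGrp_single, tail_single, cons_single,
    List.ofFn_succ, List.tail_cons, show c.1 0 = t from hc]

-- `∂(t * z) = z - t * ∂z` and both `∂(t * z)` and `z` avoid `t`, so `∂z = 0`.
lemma bdry_tail_ofCGrp_eq_zero {γ : CGrp K P (m + 1)} (hγ : γ ∈ supported K K {c | c.1 0 = t})
    (hbdry : cbdry K P m γ ∈ chainsIn K P (Set.Iio t) m) : bdry (tail (ofCGrp γ)) = 0 := by
  refine eq_zero_of_cons_mem_lettersIn (J := Set.Iio t) (lt_irrefl t) ?_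
  have hcons : cons t (bdry (tail (ofCGrp γ))) = tail (ofCGrp γ) - ofCGrp (cbdry K P m γ) := by
    rw [ofCGrp_cbdry, ← cons_tail_ofCGrp hγ, bdry_cons, cons_tail_ofCGrp hγ, sub_sub_cancel]
  rw [hcons]
  exact Submodule.sub_mem _
    (supported_mono (fun w hw => hw.2.2) (tail_ofCGrp_mem_supported_chainWords hγ))
    (ofCGrp_mem_lettersIn_iff.mpr hbdry)

end Principal

section Main
variable {K} {P : Type} [SemilatticeSup P] {ρ : (n : ℕ) → CGrp K P n →ₗ[K] CGrp K P n}
  {m : ℕ} {t : P}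

lemma shuffle_wordMap_mem_lettersIn
    (hρ : ∀ (n : ℕ) (c : OChain P (n + 1)),
      ρ (n + 1) (single c 1) ∈ chainsIn K P (Set.Iic (c.1 0)) (n + 1))
    (hm : 0 < m) {w : List P} (hw : w ∈ chainWords m t) (i j : ℕ) :
    shuffle (wordMap ρ (single (w.take i) 1)) (single (w.drop j) 1) ∈
      lettersIn K (Set.Iio t) := by
  obtain ⟨hlen, hsorted, ht⟩ := hw
  cases w with
  | nil => exact absurd hlen hm.ne
  | cons x w =>
    have hx : ∀ y ∈ x :: w, y ≤ x := List.forall_mem_cons.mpr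
      ⟨le_rfl, fun y hy => (List.rel_of_pairwise_cons hsorted.pairwise hy).le⟩
    have hsup : SupClosed (Set.Iic x) := fun _ h₁ _ h₂ => sup_le h₁ h₂
    refine lettersIn_mono (Set.Iic_subset_Iio.mpr (ht x List.mem_cons_self))
      (shuffle_mem_lettersIn hsup ?_ ?_)
    · exact wordMap_mem_lettersIn hρ (hsorted.pairwise.sublist (List.take_sublist i _)).sortedGT
        fun y hy => hx y (List.mem_of_mem_take hy)
    · exact single_mem_supported K 1 fun y hy => hx y (List.mem_of_mem_drop hy)

lemma shuffleVia_overlap_mem_lettersIn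
    (hρ : ∀ (n : ℕ) (c : OChain P (n + 1)),
      ρ (n + 1) (single c 1) ∈ chainsIn K P (Set.Iic (c.1 0)) (n + 1))
    (hm : 0 < m) {z : WordChain K P} (hz : z ∈ supported K K (chainWords m t)) (k : ℕ) :
    shuffleVia (wordMap ρ) (overlap k z) ∈ lettersIn K (Set.Iio t) := by
  refine map_mem_of_supported (F := shuffleVia (wordMap ρ) ∘ₗ overlap k) (fun w hw => ?_) hz
  rw [LinearMap.comp_apply, overlap_single, shuffleVia_tmul]
  exact shuffle_wordMap_mem_lettersIn hρ hm hw (k + 1) k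

lemma exists_ofCGrp_eq_nondeg_overlap {a b : ℕ} (hm : a + 1 + b = m) {z : WordChain K P}
    (hz : z ∈ supported K K (chainWords m t)) :
    ∃ W : CGrp K P (m + 1), ofCGrp W = nondeg (shuffleVia (wordMap ρ) (overlap a z)) := by
  refine map_mem_of_supported (F := nondeg ∘ₗ shuffleVia (wordMap ρ) ∘ₗ overlap a)
    (p := LinearMap.range ofCGrp) (fun w hw => ?_) hz
  obtain ⟨hlen, hsorted, -⟩ := hw
  obtain ⟨c, hc⟩ := exists_ofCGrp_single_eq (K := K) (n := a + 1)
    (hsorted.pairwise.sublist (List.take_sublist (a + 1) w)).sortedGT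
    (by rw [List.length_take]; omega)
  obtain ⟨d, hd⟩ := exists_ofCGrp_single_eq (K := K) (n := b + 1)
    (hsorted.pairwise.sublist (List.drop_sublist a w)).sortedGT
    (by rw [List.length_drop]; omega)
  refine ⟨_, (ofCGrp_piProj_shufLin (show a + 1 + (b + 1) = m + 1 by omega)
    (ρ (a + 1) (single c 1)) (single d 1)).trans ?_⟩
  rw [← wordMap_ofCGrp, hc, hd, LinearMap.comp_apply, LinearMap.comp_apply, overlap_single,
    shuffleVia_tmul]

lemma bdry_wordMap_take
    (hρ : ∀ n, (ρ n).comp (cbdry K P n) = (cbdry K P n).comp (ρ (n + 1)))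
    {w : List P} (hw : w.SortedGT) (i : ℕ) :
    bdry (wordMap ρ (single (w.take i) 1)) = wordMap ρ (bdry (single (w.take i) 1)) := by
  obtain ⟨c, hc⟩ := exists_ofCGrp_single_eq (K := K)
    (hw.pairwise.sublist (List.take_sublist i w)).sortedGT rfl
  rw [← hc, bdry_wordMap_ofCGrp hρ]

lemma gsign_wordMap_take {w : List P} (hw : w.SortedGT) (i : ℕ) :
    gsign (wordMap ρ (single (w.take i) 1)) = wordMap ρ (gsign (single (w.take i) 1)) := by
  obtain ⟨c, hc⟩ := exists_ofCGrp_single_eq (K := K)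
    (hw.pairwise.sublist (List.take_sublist i w)).sortedGT rfl
  rw [← hc, gsign_wordMap_ofCGrp]

variable {γ : CGrp K P (m + 1)}

theorem shuffledRepresentation_mem_cyclesAt_inf_chainsIn
    (hγ : γ ∈ supported K K {c | c.1 0 = t})
    (hbdry : cbdry K P m γ ∈ chainsIn K P (Set.Iio t) m)
    (hρ1 : ∀ n, (ρ n).comp (cbdry K P n) = (cbdry K P n).comp (ρ (n + 1)))
    (hρ2 : ∀ (n : ℕ) (c : OChain P (n + 1)),
      ρ (n + 1) (single c 1) ∈ chainsIn K P (Set.Iic (c.1 0)) (n + 1))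
    (hm : 0 < m) {k b : ℕ} {h : k + 1 + b = m + 1} {X : Finset (OChain P (k + 1))}
    {Z : OChain P (k + 1) → CGrp K P b} (hX : IsRepresentation h γ X Z) (h' : k + b = m) :
    shuffledRepresentation ρ h' X Z ∈ cyclesAt K P m ⊓ chainsIn K P (Set.Iio t) m := by
  have hz := tail_ofCGrp_mem_supported_chainWords hγ
  have hof := ofCGrp_shuffledRepresentation ρ hX h'
  refine ⟨mem_cyclesAt_of_ofCGrp_eq_nondeg hof ?_, ofCGrp_mem_lettersIn_iff.mp ?_⟩
  · rw [bdry_shuffleVia_cut k hz (fun w hw => bdry_wordMap_take hρ1 hw.2.1 k)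
      (fun w hw => gsign_wordMap_take hw.2.1 k),
      tensorBdry_cut_eq_zero (bdry_tail_ofCGrp_eq_zero hγ hbdry) hX.lTensor_bdry_cut_tail, map_zero]
  · rw [hof]
    refine nondeg_mem_lettersIn (map_mem_of_supported (F := shuffleVia (wordMap ρ) ∘ₗ cut k)
      (fun w hw => ?_) hz)
    rw [LinearMap.comp_apply, cut_single, shuffleVia_tmul]
    exact shuffle_wordMap_mem_lettersIn hρ2 hm hw k k

theorem shuffledRepresentation_sub_mem_map_cbdry
    (hγ : γ ∈ supported K K {c | c.1 0 = t})
    (hbdry : cbdry K P m γ ∈ chainsIn K P (Set.Iio t) m)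
    (hρ1 : ∀ n, (ρ n).comp (cbdry K P n) = (cbdry K P n).comp (ρ (n + 1)))
    (hρ2 : ∀ (n : ℕ) (c : OChain P (n + 1)),
      ρ (n + 1) (single c 1) ∈ chainsIn K P (Set.Iic (c.1 0)) (n + 1))
    {a b : ℕ} {h : a + 1 + 1 + b = m + 1} {X : Finset (OChain P (a + 1 + 1))}
    {Z : OChain P (a + 1 + 1) → CGrp K P b} (hX : IsRepresentation h γ X Z) (h' : a + 1 + b = m)
    {g : a + 1 + (b + 1) = m + 1} {Y : Finset (OChain P (a + 1))}
    {Z' : OChain P (a + 1) → CGrp K P (b + 1)} (hY : IsRepresentation g γ Y Z')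
    (g' : a + (b + 1) = m) :
    shuffledRepresentation ρ h' X Z - shuffledRepresentation ρ g' Y Z' ∈
      Submodule.map (cbdry K P m) (chainsIn K P (Set.Iio t) (m + 1)) := by
  have hz := tail_ofCGrp_mem_supported_chainWords hγ
  obtain ⟨W, hW⟩ := exists_ofCGrp_eq_nondeg_overlap (ρ := ρ) h' hz
  have hWt : W ∈ chainsIn K P (Set.Iio t) (m + 1) := ofCGrp_mem_lettersIn_iff.mp <|
    hW ▸ nondeg_mem_lettersIn (shuffleVia_overlap_mem_lettersIn hρ2 (by omega) hz a)
  have hbdryW : cbdry K P m W = (-1 : K) ^ a • shuffledRepresentation ρ g' Y Z' +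
      (-1 : K) ^ (a + 1) • shuffledRepresentation ρ h' X Z := ofCGrp_injective <| by
    rw [← nondeg_ofCGrp, ofCGrp_cbdry, hW, nondeg_bdry_nondeg,
      bdry_shuffleVia_overlap a hz (fun w hw => bdry_wordMap_take hρ1 hw.2.1 (a + 1))
        (fun w hw => gsign_wordMap_take hw.2.1 (a + 1)),
      tensorBdry_overlap_of_cycle (bdry_tail_ofCGrp_eq_zero hγ hbdry) hY.lTensor_bdry_cut_tail
        hX.lTensor_bdry_cut_tail]
    simp only [map_add, map_smul, ofCGrp_shuffledRepresentation ρ hX,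
      ofCGrp_shuffledRepresentation ρ hY]
  refine ⟨(-1 : K) ^ (a + 1) • W, Submodule.smul_mem _ _ hWt, ?_⟩
  rw [map_smul, hbdryW, smul_add, smul_smul, smul_smul, ← pow_add, ← pow_add,
    Odd.neg_one_pow ⟨a, by ring⟩, Even.neg_one_pow ⟨a + 1, rfl⟩, neg_one_smul, one_smul,
    neg_add_eq_sub]

end Main

end WordChain

section SynorComplex
variable {K} {P : Type} [PartialOrder P] (σ : SynorComplex K P) {n : ℕ} {x : P}

lemma synor_le_chainsIn_Iic : σ.S n x ≤ chainsIn K P (Set.Iic x) (n + 1) :=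
  (σ.graded n x).trans <| supported_mono fun c hc r => by
    rw [Set.mem_Iic, ← show c.1 0 = x from hc]
    exact c.2.antitone (Fin.zero_le r)

lemma iSup_synor_le_chainsIn {J J' : Set P} (h : ∀ x ∈ J, Set.Iic x ⊆ J') :
    ⨆ x ∈ J, σ.S n x ≤ chainsIn K P J' (n + 1) :=
  iSup₂_le fun x hx => (synor_le_chainsIn_Iic σ).trans <|
    supported_mono fun _ hc r => h x hx (hc r)

lemma cbdry_mem_chainsIn_Iio {f : CGrp K P (n + 1)} (hf : f ∈ σ.S n x) :
    cbdry K P n f ∈ chainsIn K P (Set.Iio x) n := by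
  cases n with
  | zero => exact (WordChain.chainsIn_zero (K := K) _).ge Submodule.mem_top
  | succ n =>
    exact iSup_synor_le_chainsIn σ (fun _ hy => Set.Iic_subset_Iio.mpr hy) (σ.strict n x f hf)

end SynorComplex

open WordChain in
theorem consecutive_shuffled_representations_homologous_general
    {P : Type} [SemilatticeSup P] {t : P} {m : ℕ} {γ : CGrp K P (m + 1)}
    (hγ : γ ∈ supported K K {c | c.1 0 = t})
    (hbdry : cbdry K P m γ ∈ chainsIn K P (Set.Iio t) m)
    {ρ : (n : ℕ) → CGrp K P n →ₗ[K] CGrp K P n}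
    (hρ1 : ∀ n, (ρ n).comp (cbdry K P n) = (cbdry K P n).comp (ρ (n + 1)))
    (hρ2 : ∀ (n : ℕ) (c : OChain P (n + 1)),
      ρ (n + 1) (single c 1) ∈ chainsIn K P (Set.Iic (c.1 0)) (n + 1))
    {a b : ℕ} {hA : a + 1 + 1 + b = m + 1} {XA : Finset (OChain P (a + 1 + 1))}
    {ζA : OChain P (a + 1 + 1) → CGrp K P b} (hXA : IsRepresentation hA γ XA ζA)
    {hB : a + 1 + (b + 1) = m + 1} {XB : Finset (OChain P (a + 1))}
    {ζB : OChain P (a + 1) → CGrp K P (b + 1)} (hXB : IsRepresentation hB γ XB ζB)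
    (hlenA : a + 1 + b = m) (hlenB : a + (b + 1) = m) :
    shuffledRepresentation ρ hlenA XA ζA ∈ cyclesAt K P m ⊓ chainsIn K P (Set.Iio t) m ∧
    shuffledRepresentation ρ hlenB XB ζB ∈ cyclesAt K P m ⊓ chainsIn K P (Set.Iio t) m ∧
    shuffledRepresentation ρ hlenA XA ζA - shuffledRepresentation ρ hlenB XB ζB ∈
      Submodule.map (cbdry K P m) (chainsIn K P (Set.Iio t) (m + 1)) :=
  have hm : 0 < m := by omega
  ⟨shuffledRepresentation_mem_cyclesAt_inf_chainsIn hγ hbdry hρ1 hρ2 hm hXA hlenA,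
    shuffledRepresentation_mem_cyclesAt_inf_chainsIn hγ hbdry hρ1 hρ2 hm hXB hlenB,
    shuffledRepresentation_sub_mem_map_cbdry hγ hbdry hρ1 hρ2 hXA hlenA hXB hlenB⟩

/-- Let `L` be a finite lattice with `0̂ ≠ 1̂`, `L̄ = L ∖ {0̂}`,
`Ľ = L ∖ {0̂, 1̂}`.  Fix a synor complex `S_*(L̄) ⊆ C̃_*(L̄)` and maps `ρ_k` satisfying
(R0)–(R2).  Let `γ = 1̂ * ζ ∈ S_m(L̄)^{(1̂)}` be a principal synor chain, `1 ≤ ℓ ≤ m`, and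
let `γ = Σ_{χ ∈ X_ℓ^γ} χ * ζ_χ` and `γ = Σ_{χ′ ∈ X_{ℓ-1}^γ} χ′ * ζ_{χ′}` be its `ℓ`- and
`(ℓ-1)`-representations.  Then the chains
`Σ_{χ ∈ X_ℓ^γ} π(ρ_{ℓ-1}(∂_ℓ^{(0)}(χ)) ⧢ ζ_χ)` and
`Σ_{χ′ ∈ X_{ℓ-1}^γ} π(ρ_{ℓ-2}(∂_{ℓ-1}^{(0)}(χ′)) ⧢ ζ_{χ′})`
are cycles supported in `Ľ`, and they are homologous in `H̃_{m-1}(Ľ)`. -/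
theorem consecutive_shuffled_representations_homologous
    (L : Type) [Lattice L] [BoundedOrder L] [Fintype L] (hbt : (⊥ : L) ≠ ⊤)
    (σ : SynorComplex K (Punct L))
    (ρ : (nn : ℕ) → CGrp K (Punct L) nn →ₗ[K] CGrp K (Punct L) nn)
    (hρ0 : ρ 0 = LinearMap.id)
    (hρS : ∀ (nn : ℕ) (f : CGrp K (Punct L) nn),
      ρ nn f ∈ idealPart K (Punct L) σ.S Set.univ nn)
    (hρ1 : ∀ nn : ℕ,
      (ρ nn).comp (cbdry K (Punct L) nn) = (cbdry K (Punct L) nn).comp (ρ (nn + 1)))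
    (hρ2 : ∀ (nn : ℕ) (c : OChain (Punct L) (nn + 1)),
      ρ (nn + 1) (Finsupp.single c 1) ∈ ⨆ y ∈ Set.Iic (c.1 0), σ.S nn y)
    (m ℓ : ℕ) (h1 : 1 ≤ ℓ) (h2 : ℓ ≤ m)
    (γ : CGrp K (Punct L) (m + 1))
    (hγ : γ ∈ σ.S m ⟨(⊤ : L), fun h => hbt h.symm⟩)
    -- the ℓ-representation of γ
    (ζA : OChain (Punct L) (ℓ + 1) → CGrp K (Punct L) (m - ℓ))
    (hA0 : ∀ χ : OChain (Punct L) (ℓ + 1),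
      ζA χ ∈ cyclesAt K (Punct L) (m - ℓ) ⊓
        idealPart K (Punct L) σ.S (Set.Iio (χ.1 (Fin.last ℓ))) (m - ℓ))
    (hA1 : ∀ χ : OChain (Punct L) (ℓ + 1), ζA χ ∈ Finsupp.supported K K
      {c : OChain (Punct L) (m - ℓ) |
        ∀ (s : Fin (m - ℓ)) (r : Fin (ℓ + 1)), c.1 s < χ.1 r})
    (hA2 : ∀ χ ∉ initSegs K (Punct L) γ (ℓ + 1) (by omega), ζA χ = 0)
    (hA3 : γ = ∑ᶠ χ ∈ initSegs K (Punct L) γ (ℓ + 1) (by omega),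
      castCGrp K (Punct L) (by omega) (prependC K (Punct L) χ (ζA χ)))
    -- the (ℓ-1)-representation of γ
    (ζB : OChain (Punct L) ℓ → CGrp K (Punct L) (m - ℓ + 1))
    (hB0 : ∀ χ' : OChain (Punct L) ℓ,
      ζB χ' ∈ cyclesAt K (Punct L) (m - ℓ + 1) ⊓
        idealPart K (Punct L) σ.S
          (Set.Iio (χ'.1 (Fin.last (ℓ - 1) |>.cast (by omega)))) (m - ℓ + 1))
    (hB1 : ∀ χ' : OChain (Punct L) ℓ, ζB χ' ∈ Finsupp.supported K K
      {c : OChain (Punct L) (m - ℓ + 1) |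
        ∀ (s : Fin (m - ℓ + 1)) (r : Fin ℓ), c.1 s < χ'.1 r})
    (hB2 : ∀ χ' ∉ initSegs K (Punct L) γ ℓ (by omega), ζB χ' = 0)
    (hB3 : γ = ∑ᶠ χ' ∈ initSegs K (Punct L) γ ℓ (by omega),
      castCGrp K (Punct L) (by omega) (prependC K (Punct L) χ' (ζB χ'))) :
    ((∑ᶠ χ ∈ initSegs K (Punct L) γ (ℓ + 1) (by omega),
        piProj K (Punct L) m (castMGrp K (Punct L) (show ℓ + (m - ℓ) = m by omega)
          (shufLin K (Punct L) ℓ (m - ℓ)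
            (iotaCM K (Punct L) ℓ (ρ ℓ (Finsupp.single (odel (Punct L) 0 χ) 1)))
            (iotaCM K (Punct L) (m - ℓ) (ζA χ))))) ∈
      cyclesAt K (Punct L) m ⊓
        chainsIn K (Punct L) {y : Punct L | (y : L) ≠ ⊤} m) ∧
    ((∑ᶠ χ' ∈ initSegs K (Punct L) γ ℓ (by omega),
        piProj K (Punct L) m (castMGrp K (Punct L) (show (ℓ - 1) + (m - ℓ + 1) = m by omega)
          (shufLin K (Punct L) (ℓ - 1) (m - ℓ + 1)
            (iotaCM K (Punct L) (ℓ - 1)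
              (ρ (ℓ - 1) (Finsupp.single (odel (Punct L) 0 (castOC (show ℓ = (ℓ - 1) + 1 by omega) χ')) 1)))
            (iotaCM K (Punct L) (m - ℓ + 1) (ζB χ'))))) ∈
      cyclesAt K (Punct L) m ⊓
        chainsIn K (Punct L) {y : Punct L | (y : L) ≠ ⊤} m) ∧
    ((∑ᶠ χ ∈ initSegs K (Punct L) γ (ℓ + 1) (by omega),
        piProj K (Punct L) m (castMGrp K (Punct L) (show ℓ + (m - ℓ) = m by omega)
          (shufLin K (Punct L) ℓ (m - ℓ)
            (iotaCM K (Punct L) ℓ (ρ ℓ (Finsupp.single (odel (Punct L) 0 χ) 1)))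
            (iotaCM K (Punct L) (m - ℓ) (ζA χ))))) -
      (∑ᶠ χ' ∈ initSegs K (Punct L) γ ℓ (by omega),
        piProj K (Punct L) m (castMGrp K (Punct L) (show (ℓ - 1) + (m - ℓ + 1) = m by omega)
          (shufLin K (Punct L) (ℓ - 1) (m - ℓ + 1)
            (iotaCM K (Punct L) (ℓ - 1)
              (ρ (ℓ - 1) (Finsupp.single (odel (Punct L) 0 (castOC (show ℓ = (ℓ - 1) + 1 by omega) χ')) 1)))
            (iotaCM K (Punct L) (m - ℓ + 1) (ζB χ'))))) ∈
      Submodule.map (cbdry K (Punct L) m)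
        (chainsIn K (Punct L) {y : Punct L | (y : L) ≠ ⊤} (m + 1))) := by
  obtain ⟨a, rfl⟩ : ∃ a, ℓ = a + 1 := ⟨ℓ - 1, by omega⟩
  have hJ : {y : Punct L | (y : L) ≠ ⊤} = Set.Iio ⟨(⊤ : L), fun h => hbt h.symm⟩ :=
    Set.ext fun y => lt_top_iff_ne_top.symm
  have hfin (n : ℕ) : Finite (OChain (Punct L) n) := Subtype.finite
  rw [finsum_mem_eq_finite_toFinset_sum _ (Set.toFinite _)] at hA3 hB3
  rw [hJ, finsum_mem_eq_finite_toFinset_sum _ (Set.toFinite _),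
    finsum_mem_eq_finite_toFinset_sum _ (Set.toFinite _)]
  exact consecutive_shuffled_representations_homologous_general K (σ.graded m _ hγ)
    (cbdry_mem_chainsIn_Iio σ hγ) hρ1
    (fun n c => iSup_synor_le_chainsIn σ (fun _ hy => Set.Iic_subset_Iic.mpr hy) (hρ2 n c))
    ⟨fun χ _ => (hA0 χ).1, fun χ _ => hA1 χ, hA3⟩ ⟨fun χ _ => (hB0 χ).1, fun χ _ => hB1 χ, hB3⟩
    (by omega) (by omega)

end
end
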